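/- arXiv:2509.00769 — 4 statements merged into one kernel-verified Lean document; each statement's English description precedes it below -/
import Mathlib

section
/- Let a and b be positive integers with b > a, and let G be a connected graph of order n ≥ 2(a+b+2)(b+2) with minimum degree δ(G) ≥ a. If ρ(G) ≥ ρ(H_n^{a,b}), then G contains an [a,b]-factor, unless G is isomorphic to H_n^{a,b}. -/
set_option linter.unusedSectionVars false

open Finset Matrix

namespace SimpleGraph

variable {V : Type*} [Fintype V] [DecidableEq V]

lemma isHermitian_adjMatrix' (G : SimpleGraph V) [DecidableRel G.Adj] :
    (G.adjMatrix ℝ).IsHermitian := by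
  rw [Matrix.IsHermitian, conjTranspose_eq_transpose_of_trivial, isSymm_adjMatrix]

/-- The spectral radius (largest adjacency eigenvalue) of a finite simple graph. -/
noncomputable def spectralRadius (G : SimpleGraph V) : ℝ :=
  letI := Classical.decRel G.Adj
  ⨆ i, (isHermitian_adjMatrix' G).eigenvalues i

/-- `G` has an `[a,b]`-factor: a spanning subgraph all of whose degrees lie in `[a,b]`. -/
def HasABFactor (G : SimpleGraph V) (a b : ℕ) : Prop :=
  ∃ H : SimpleGraph V, H ≤ G ∧ ∀ v : V,
    letI := Classical.decRel H.Adj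
    a ≤ H.degree v ∧ H.degree v ≤ b

/-- `G` has a fractional `[a,b]`-factor: a weighting of the edges by values in `[0,1]`
such that the total weight at every vertex lies in `[a,b]`. -/
def HasFractionalABFactor (G : SimpleGraph V) (a b : ℕ) : Prop :=
  letI := Classical.decRel G.Adj
  ∃ h : Sym2 V → ℝ, (∀ e ∈ G.edgeSet, 0 ≤ h e ∧ h e ≤ 1) ∧
    ∀ v : V, (a : ℝ) ≤ ∑ e ∈ G.incidenceFinset v, h e ∧
      ∑ e ∈ G.incidenceFinset v, h e ≤ (b : ℝ)

end SimpleGraph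

/-- `K_a ∨ (K_{n-a-b-1} ∪ (b+1)K_1)`, with vertices `0,…,a-1` forming the `K_a`,
vertices `a,…,n-b-2` forming the `K_{n-a-b-1}`, and the last `b+1` vertices independent. -/
def baseGraph (n a b : ℕ) : SimpleGraph (Fin n) :=
  SimpleGraph.fromRel (fun i j => (i : ℕ) < a ∨ ((i : ℕ) < n - b - 1 ∧ (j : ℕ) < n - b - 1))

/-- The graph `H_n^{a,b}`: `baseGraph n a b` together with `a-1` extra edges joining the
vertex `n-b-1` (a fixed vertex of the independent part `(b+1)K_1`) to the `a-1`
vertices `a,…,2a-2` of the `K_{n-a-b-1}` part. -/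
def Hgraph (n a b : ℕ) : SimpleGraph (Fin n) :=
  SimpleGraph.fromRel (fun i j => (i : ℕ) < a ∨ ((i : ℕ) < n - b - 1 ∧ (j : ℕ) < n - b - 1) ∨
    ((i : ℕ) = n - b - 1 ∧ a ≤ (j : ℕ) ∧ (j : ℕ) < 2 * a - 1))

/-- The family `𝒢_n^{a,b}`: graphs obtained from `baseGraph n a b` by adding `a-1` edges
between the clique part `{a,…,n-b-2}` and the independent part `{n-b-1,…,n-1}`. -/
def GFamily (n a b : ℕ) (G : SimpleGraph (Fin n)) : Prop :=
  ∃ F : Finset (Fin n × Fin n), F.card = a - 1 ∧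
    (∀ p ∈ F, a ≤ (p.1 : ℕ) ∧ (p.1 : ℕ) < n - b - 1 ∧ n - b - 1 ≤ (p.2 : ℕ)) ∧
    G = baseGraph n a b ⊔ SimpleGraph.fromEdgeSet ((fun p : Fin n × Fin n => s(p.1, p.2)) '' F)

section Spectral

variable {V : Type*} [Fintype V] [DecidableEq V]

lemma psd_aux (G : SimpleGraph V) [inst : DecidableRel G.Adj] :
    ((G.spectralRadius) • (1 : Matrix V V ℝ) - G.adjMatrix ℝ).PosSemidef := by
  have hi : inst = Classical.decRel G.Adj := Subsingleton.elim _ _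
  subst hi
  letI := Classical.decRel G.Adj
  set hA := SimpleGraph.isHermitian_adjMatrix' G with hA'
  have h1 : (G.spectralRadius) • (1 : Matrix V V ℝ) - G.adjMatrix ℝ =
      (hA.eigenvectorUnitary : Matrix V V ℝ) *
        (Matrix.diagonal (fun i => G.spectralRadius - hA.eigenvalues i)) *
        (hA.eigenvectorUnitary : Matrix V V ℝ).conjTranspose := by
    have h2 := hA.spectral_theorem
    rw [Unitary.conjStarAlgAut_apply] at h2
    have h3 : (Matrix.diagonal (fun i => G.spectralRadius - hA.eigenvalues i)) =
      G.spectralRadius • (1 : Matrix V V ℝ) - Matrix.diagonal (RCLike.ofReal ∘ hA.eigenvalues) := by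
      ext i j
      by_cases h : i = j
      · subst h; simp
      · simp [h]
    have h4 : (hA.eigenvectorUnitary : Matrix V V ℝ) *
        (hA.eigenvectorUnitary : Matrix V V ℝ).conjTranspose = 1 :=
      Unitary.mul_star_self_of_mem hA.eigenvectorUnitary.2
    rw [h3, mul_sub, sub_mul, mul_smul_comm, mul_one, smul_mul_assoc, h4]
    congr 1
  rw [h1]
  apply Matrix.PosSemidef.mul_mul_conjTranspose_same
  rw [Matrix.posSemidef_diagonal_iff]
  intro i
  have : hA.eigenvalues i ≤ G.spectralRadius :=
    le_ciSup (f := fun i => hA.eigenvalues i) (Set.finite_range _).bddAbove i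
  linarith

lemma mulVec_aux (G : SimpleGraph V) [DecidableRel G.Adj] (x : V → ℝ) (i : V) :
    (G.adjMatrix ℝ *ᵥ x) i = ∑ j with G.Adj i j, x j := by
  rw [SimpleGraph.adjMatrix_mulVec_apply]
  apply Finset.sum_congr _ (fun _ _ => rfl)
  ext; simp

lemma quad_aux (G : SimpleGraph V) [DecidableRel G.Adj] (x : V → ℝ) :
    x ⬝ᵥ ((G.spectralRadius) • (1 : Matrix V V ℝ) - G.adjMatrix ℝ) *ᵥ x =
     G.spectralRadius * ∑ i, x i ^ 2 - ∑ i, x i * ∑ j with G.Adj i j, x j := by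
  rw [Matrix.sub_mulVec, dotProduct_sub, Matrix.smul_mulVec, Matrix.one_mulVec, dotProduct_smul]
  congr 1
  · simp [dotProduct, pow_two]
  · simp only [dotProduct, mulVec_aux]

lemma rayleigh (G : SimpleGraph V) [DecidableRel G.Adj] (x : V → ℝ) :
    ∑ i, x i * ∑ j with G.Adj i j, x j ≤ G.spectralRadius * ∑ i, x i ^ 2 := by
  have := (psd_aux G).dotProduct_mulVec_nonneg x
  rw [star_trivial, quad_aux] at this
  linarith

lemma exists_perron [Nonempty V] (G : SimpleGraph V) [inst : DecidableRel G.Adj] :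
    ∃ x : V → ℝ, (∀ i, 0 ≤ x i) ∧ (∃ i, 0 < x i) ∧
      ∀ i, ∑ j with G.Adj i j, x j = G.spectralRadius * x i := by
  have hi : inst = Classical.decRel G.Adj := Subsingleton.elim _ _
  subst hi
  letI := Classical.decRel G.Adj
  obtain ⟨k, hk⟩ := exists_eq_ciSup_of_finite
    (f := fun i => (SimpleGraph.isHermitian_adjMatrix' G).eigenvalues i)
  change _ = G.spectralRadius at hk
  set hA := SimpleGraph.isHermitian_adjMatrix' G with hA'
  set v : V → ℝ := (hA.eigenvectorBasis k).ofLp with hv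
  have h1 : ∀ i, ∑ j with G.Adj i j, v j = G.spectralRadius * v i := by
    intro i
    have := congrFun (hA.mulVec_eigenvectorBasis k) i
    rw [mulVec_aux] at this
    simp only [Pi.smul_apply, smul_eq_mul] at this
    rw [← hk]
    exact this
  have h0 : ∃ i, v i ≠ 0 := by
    by_contra! h
    have : hA.eigenvectorBasis k = 0 := by
      ext i; exact h i
    have h2 := hA.eigenvectorBasis.orthonormal.1 k
    rw [this] at h2
    simp at h2
  have h3 : ∑ i, |v i| * ∑ j with G.Adj i j, |v j| = G.spectralRadius * ∑ i, |v i| ^ 2 := by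
    apply le_antisymm (rayleigh G _)
    rw [Finset.mul_sum]
    apply Finset.sum_le_sum
    intro i _
    calc G.spectralRadius * |v i| ^ 2 = v i * ∑ j with G.Adj i j, v j := by
          rw [h1, sq_abs]; ring
      _ ≤ |v i * ∑ j with G.Adj i j, v j| := le_abs_self _
      _ = |v i| * |∑ j with G.Adj i j, v j| := abs_mul _ _
      _ ≤ _ := by gcongr; exact Finset.abs_sum_le_sum_abs _ _
  refine ⟨fun i => |v i|, fun i => abs_nonneg _, ?_, ?_⟩
  · obtain ⟨i, hi⟩ := h0
    exact ⟨i, abs_pos.mpr hi⟩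
  · have h4 := ((psd_aux G).dotProduct_mulVec_zero_iff (fun i => |v i|)).1
      (by rw [star_trivial, quad_aux, h3, sub_self])
    intro i
    have h5 := congrFun h4 i
    rw [Matrix.sub_mulVec, Matrix.smul_mulVec, Matrix.one_mulVec] at h5
    simp only [Pi.sub_apply, mulVec_aux, Pi.smul_apply, smul_eq_mul, Pi.zero_apply] at h5
    linarith

end Spectral

section Factor

variable {V : Type*} [Fintype V] [DecidableEq V]

open Classical in
noncomputable def dg (H : SimpleGraph V) (v : V) : ℕ := #{w | H.Adj v w}

lemma dg_eq (H : SimpleGraph V) [DecidableRel H.Adj] (v : V) : dg H v = #{w | H.Adj v w} := by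
  unfold dg
  congr

lemma dg_add (H : SimpleGraph V) {u v : V} (huv : u ≠ v) (h : ¬ H.Adj u v) (x : V) :
    dg (H ⊔ SimpleGraph.edge u v) x = dg H x + (if x = u ∨ x = v then 1 else 0) := by
  classical
  rw [dg_eq (H ⊔ SimpleGraph.edge u v), dg_eq H]
  have h' : ¬ H.Adj v u := fun hh => h hh.symm
  by_cases hu : x = u
  · subst hu
    have : (univ.filter fun w => (H ⊔ SimpleGraph.edge x v).Adj x w) =
        insert v (univ.filter fun w => H.Adj x w) := by
      ext w
      simp [SimpleGraph.edge_adj]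
      grind
    rw [this, Finset.card_insert_of_notMem (by simpa using h)]
    simp
  · by_cases hv : x = v
    · subst hv
      have : (univ.filter fun w => (H ⊔ SimpleGraph.edge u x).Adj x w) =
          insert u (univ.filter fun w => H.Adj x w) := by
        ext w
        simp [SimpleGraph.edge_adj]
        grind
      rw [this, Finset.card_insert_of_notMem (by simpa using h')]
      simp
    · have : (univ.filter fun w => (H ⊔ SimpleGraph.edge u v).Adj x w) =
          (univ.filter fun w => H.Adj x w) := by
        ext w
        simp [SimpleGraph.edge_adj]
        grind
      rw [this]
      simp [hu, hv]

lemma dg_del (H : SimpleGraph V) {u v : V} (h : H.Adj u v) (x : V) :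
    dg (H \ SimpleGraph.edge u v) x + (if x = u ∨ x = v then 1 else 0) = dg H x := by
  have huv := h.ne
  rw [← dg_add _ huv]
  · congr 1
    ext p q
    simp [SimpleGraph.edge_adj]
    have := h.symm
    grind
  · simp [SimpleGraph.edge_adj, huv]

def Good (G : SimpleGraph V) (b : ℕ) (H : SimpleGraph V) : Prop := H ≤ G ∧ ∀ v, dg H v ≤ b

noncomputable def defic (a : ℕ) (H : SimpleGraph V) : ℕ := ∑ v, (a - dg H v)

def Opt (G : SimpleGraph V) (a b : ℕ) (H : SimpleGraph V) : Prop :=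
  Good G b H ∧ ∀ H', Good G b H' → defic a H ≤ defic a H'

def Alt (G H : SimpleGraph V) (p : ℕ → V) (L : ℕ) : Prop :=
  ∀ i < L, G.Adj (p i) (p (i + 1)) ∧ (H.Adj (p i) (p (i + 1)) ↔ i % 2 = 1)

def Viol (a b : ℕ) (H : SimpleGraph V) (L : ℕ) (v : V) : Prop :=
  (L % 2 = 1 ∧ dg H v < b) ∨ (L % 2 = 0 ∧ a < dg H v)

set_option maxHeartbeats 1000000 in
lemma no_walk (G : SimpleGraph V) {a b : ℕ} (hab : a < b) (L : ℕ) :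
    ∀ (H : SimpleGraph V) (p : ℕ → V), Opt G a b H → Alt G H p L → dg H (p 0) < a →
      Viol a b H L (p L) → False := by
  induction L using Nat.strong_induction_on with
  | _ L ih =>
  intro H p hO hA h0 hV
  obtain ⟨⟨hHG, hHb⟩, hmin⟩ := hO
  have hO : Opt G a b H := ⟨⟨hHG, hHb⟩, hmin⟩
  have hnv : ∀ i < L, ¬ Viol a b H i (p i) := by
    intro i hi hv
    exact ih i hi H p hO (fun j hj => hA j (by omega)) h0 hv
  have hodd : ∀ i < L, i % 2 = 1 → dg H (p i) = b := by
    intro i hi h1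
    have := hnv i hi
    have := hHb (p i)
    unfold Viol at *
    omega
  have heven : ∀ i < L, i % 2 = 0 → dg H (p i) ≤ a := by
    intro i hi h1
    have := hnv i hi
    unfold Viol at *
    omega
  have hL0 : L ≠ 0 := by
    rintro rfl
    unfold Viol at hV
    omega
  have e0 := hA 0 (by omega)
  have n01 : ¬ H.Adj (p 0) (p 1) := by simpa using e0.2
  have a01 : G.Adj (p 0) (p 1) := e0.1
  have d1 := dg_add H a01.ne n01
  have hle1 : H ⊔ SimpleGraph.edge (p 0) (p 1) ≤ G :=
    sup_le hHG (by rw [SimpleGraph.edge_le_iff]; exact Or.inr a01)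
  by_cases hL1 : L = 1
  · subst hL1
    have hd1 : dg H (p 1) < b := by unfold Viol at hV; omega
    have hg : Good G b (H ⊔ SimpleGraph.edge (p 0) (p 1)) := by
      refine ⟨hle1, fun v => ?_⟩
      rw [d1 v]
      have := hHb v
      split_ifs with h
      · rcases h with h | h <;> subst h <;> omega
      · omega
    have := hmin _ hg
    have h2 : defic a (H ⊔ SimpleGraph.edge (p 0) (p 1)) < defic a H := by
      unfold defic
      apply Finset.sum_lt_sum
      · intro v _
        rw [d1 v]; omega
      · refine ⟨p 0, mem_univ _, ?_⟩
        rw [d1 (p 0)]; simp; omega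
    omega
  have e1 := hA 1 (by omega)
  have a12 : H.Adj (p 1) (p 2) := by simpa using e1.2
  have a12' : H.Adj (p 2) (p 1) := a12.symm
  have n02 : p 0 ≠ p 2 := by
    intro h; rw [h] at n01; exact n01 a12.symm
  have n10 := a01.ne
  have n12 := a12.ne
  set H1 := H ⊔ SimpleGraph.edge (p 0) (p 1) with hH1
  have a12'' : H1.Adj (p 1) (p 2) := Or.inl a12
  have d2 := dg_del H1 a12''
  set H2 := H1 \ SimpleGraph.edge (p 1) (p 2) with hH2
  have hle2 : H2 ≤ G := le_trans sdiff_le hle1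
  have dd : ∀ x, dg H2 x + (if x = p 2 then 1 else 0) = dg H x + (if x = p 0 then 1 else 0) := by
    intro x
    have h1 := d1 x
    have h2 := d2 x
    by_cases x0 : x = p 0
    · subst x0; simp [n10, n02] at *; omega
    · by_cases x1 : x = p 1
      · subst x1; simp [n12, x0] at *; omega
      · by_cases x2 : x = p 2
        · subst x2; simp [x0, x1] at *; omega
        · simp [x0, x1, x2] at *; omega
  have hg : Good G b H2 := by
    refine ⟨hle2, fun v => ?_⟩
    have := dd v
    have := hHb v
    by_cases h : v = p 0
    · subst h
      simp [n02] at *; omega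
    · simp [h] at *; omega
  by_cases hL2 : L = 2
  · subst hL2
    have hd2 : a < dg H (p 2) := by unfold Viol at hV; omega
    have := hmin _ hg
    have h2 : defic a H2 < defic a H := by
      unfold defic
      apply Finset.sum_lt_sum
      · intro v _
        have := dd v
        by_cases h : v = p 2
        · subst h; simp [n02.symm] at this; omega
        · simp [h] at this; omega
      · refine ⟨p 0, mem_univ _, ?_⟩
        have := dd (p 0)
        simp [n02] at this; omega
    omega
  have hd2 : dg H (p 2) ≤ a := heven 2 (by omega) rfl
  have hd1 : dg H (p 1) = b := hodd 1 (by omega) rfl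
  have hdef : defic a H2 = defic a H := by
    have : ∑ v, ((a - dg H2 v) + (if v = p 0 then 1 else 0)) =
        ∑ v, ((a - dg H v) + (if v = p 2 then 1 else 0)) := by
      apply Finset.sum_congr rfl
      intro v _
      have := dd v
      by_cases h : v = p 2
      · subst h; simp [n02.symm] at *; omega
      · by_cases h' : v = p 0
        · subst h'; simp [h] at *; omega
        · simp [h, h'] at *; omega
    rw [Finset.sum_add_distrib, Finset.sum_add_distrib] at this
    simp at this
    exact this
  have hO2 : Opt G a b H2 := ⟨hg, fun H' h' => by rw [hdef]; exact hmin H' h'⟩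
  -- shortcut
  have hshort : ∀ j, 1 < j → j ≤ L → j % 2 = 1 → p j ≠ p 1 := by
    intro j h1 h2 h3 h4
    refine ih (L - j + 1) (by omega) H (fun i => if i = 0 then p 0 else p (i + j - 1)) hO ?_
      (by simpa using h0) ?_
    · intro i hi
      by_cases hi0 : i = 0
      · subst hi0
        simp [h4, a01, n01]
      · simp only [hi0, if_false, Nat.add_eq_zero_iff, one_ne_zero, and_false]
        have := hA (i + j - 1) (by omega)
        rw [show i + 1 + j - 1 = (i + j - 1) + 1 by omega]
        refine ⟨this.1, this.2.trans ?_⟩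
        omega
    · have : L - j + 1 + j - 1 = L := by omega
      simp only [Nat.add_eq_zero_iff, one_ne_zero, and_false, if_false, this]
      unfold Viol at *
      omega
  refine ih (L - 2) (by omega) H2 (fun i => p (i + 2)) hO2 ?_ ?_ ?_
  · intro i hi
    have hh := hA (i + 2) (by omega)
    refine ⟨by have := hh.1; rwa [show i + 2 + 1 = i + 1 + 2 by omega] at this, ?_⟩
    have hh2 : H.Adj (p (i + 2)) (p (i + 1 + 2)) ↔ i % 2 = 1 := by
      have := hh.2
      rw [show i + 2 + 1 = i + 1 + 2 by omega] at this
      rw [this]; omega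
    rw [← hh2]
    have key : H2.Adj (p (i + 2)) (p (i + 1 + 2)) ↔
      (H.Adj (p (i + 2)) (p (i + 1 + 2)) ∨
        (p (i+2) = p 0 ∧ p (i+1+2) = p 1 ∨ p (i+2) = p 1 ∧ p (i+1+2) = p 0)) ∧
       ¬ (p (i+2) = p 1 ∧ p (i+1+2) = p 2 ∨ p (i+2) = p 2 ∧ p (i+1+2) = p 1) := by
      have := (hh.1).ne
      rw [show i + 2 + 1 = i + 1 + 2 by omega] at this
      simp only [hH2, hH1, SimpleGraph.sdiff_adj, SimpleGraph.sup_adj, SimpleGraph.edge_adj,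
        ne_eq, this, not_false_iff, and_true]
    rw [key]
    have a1 := a01.symm
    rcases Nat.mod_two_eq_zero_or_one i with hi2 | hi2
    · -- even step
      have s1 := hshort (i + 1 + 2) (by omega) (by omega) (by omega)
      have s2 : p (i + 2) ≠ p 1 := by
        intro h
        have := heven (i + 2) (by omega) (by omega)
        rw [h] at this; omega
      simp only [s1, s2, false_and, and_false, or_false, not_false_iff, and_true]
    · have s1 := hshort (i + 2) (by omega) (by omega) (by omega)
      have s2 : p (i + 2) ≠ p 2 := by
        intro h
        have := hodd (i + 2) (by omega) (by omega)
        rw [h] at this; omega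
      have s3 : p (i + 2) ≠ p 0 := by
        intro h
        have := hodd (i + 2) (by omega) (by omega)
        rw [h] at this; omega
      simp only [s1, s2, s3, false_and, or_false, not_false_iff, and_true]
  · have := dd (p 2)
    simp [n02.symm] at this
    simp only [zero_add]; omega
  · have h1 := dd (p L)
    simp only [show L - 2 + 2 = L by omega]
    unfold Viol at *
    by_cases x0 : p L = p 0
    · rw [x0] at h1 hV ⊢; simp [n02] at h1; omega
    · by_cases x2 : p L = p 2
      · rw [x2] at h1 hV ⊢; simp [n02.symm] at h1; omega
      · simp [x0, x2] at h1; omega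

lemma factor_thm (G : SimpleGraph V) [DecidableRel G.Adj] {a b : ℕ} (hab : a < b)
    (hno : ¬ G.HasABFactor a b) :
    ∃ S T : Finset V, Disjoint S T ∧
      b * #S + ∑ v ∈ T, #{w | w ∉ S ∧ G.Adj v w} < a * #T := by
  classical
  obtain ⟨H, hO⟩ : ∃ H, Opt G a b H := by
    have hbot : Good G b (⊥ : SimpleGraph V) := ⟨bot_le, fun v => by simp [dg]⟩
    obtain ⟨H, hH, hm⟩ := WellFounded.has_min (measure (defic (V := V) a)).wf {H | Good G b H}
      ⟨_, hbot⟩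
    exact ⟨H, hH, fun H' h' => not_lt.1 (hm H' h')⟩
  have hO' := hO
  obtain ⟨⟨hHG, hHb⟩, hmin⟩ := hO
  obtain ⟨v0, hv0⟩ : ∃ v, dg H v < a := by
    by_contra! h
    apply hno
    refine ⟨H, hHG, fun v => ?_⟩
    have : dg H v = @SimpleGraph.degree V H v
        (let := Classical.decRel H.Adj; inferInstance) := by
      unfold dg SimpleGraph.degree
      congr 1
      ext w; simp
    rw [← this]
    exact ⟨h v, hHb v⟩
  let R : ℕ → V → Prop := fun r v => ∃ L p, L % 2 = r ∧ Alt G H p L ∧ p 0 = v0 ∧ p L = v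
  have hext : ∀ r v w, R r v → G.Adj v w → (H.Adj v w ↔ r = 1) → R ((r + 1) % 2) w := by
    rintro r v w ⟨L, p, hL, hA, hp0, hpL⟩ hG hH
    refine ⟨L + 1, fun i => if i ≤ L then p i else w, by omega, ?_, by simpa using hp0, by simp⟩
    intro i hi
    by_cases h : i = L
    · subst h
      simp [hpL, hG, hH, hL]
    · have := hA i (by omega)
      have h1 : i ≤ L := by omega
      have h2 : i + 1 ≤ L := by omega
      simpa [h1, h2] using this
  have hnv : ∀ r v, R r v → ¬ Viol a b H r v := by
    rintro r v ⟨L, p, hL, hA, hp0, hpL⟩ hV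
    refine no_walk G hab L H p hO' hA (hp0 ▸ hv0) ?_
    rw [hpL]
    unfold Viol at *
    omega
  let S : Finset V := univ.filter (R 1)
  let T : Finset V := univ.filter (R 0)
  have hS : ∀ v ∈ S, dg H v = b := by
    intro v hv
    have := hnv 1 v (by simpa [S] using hv)
    have := hHb v
    unfold Viol at *; omega
  have hT : ∀ v ∈ T, dg H v ≤ a := by
    intro v hv
    have := hnv 0 v (by simpa [T] using hv)
    unfold Viol at *; omega
  have hST : Disjoint S T := by
    rw [Finset.disjoint_left]
    intro v h1 h2
    have := hS v h1
    have := hT v h2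
    omega
  have hv0T : v0 ∈ T := by
    simp only [T, mem_filter, mem_univ, true_and]
    exact ⟨0, fun _ => v0, rfl, fun i hi => by omega, rfl, rfl⟩
  have hTS : ∀ v ∈ T, ∀ w, G.Adj v w → ¬ H.Adj v w → w ∈ S := by
    intro v hv w hG hH
    have := hext 0 v w (by simpa [T] using hv) hG (by simpa using hH)
    simpa [S] using this
  have hSTa : ∀ v ∈ S, ∀ w, H.Adj v w → w ∈ T := by
    intro v hv w hH
    have := hext 1 v w (by simpa [S] using hv) (hHG hH) (by simpa using hH)
    simpa [T] using this
  refine ⟨S, T, hST, ?_⟩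
  have c1 : b * #S = ∑ w ∈ T, #{v ∈ S | H.Adj v w} := by
    have := Finset.sum_card_bipartiteAbove_eq_sum_card_bipartiteBelow (s := S) (t := T)
      (r := fun v w => H.Adj v w)
    unfold bipartiteBelow at this
    rw [← this, mul_comm, ← smul_eq_mul, ← Finset.sum_const]
    apply Finset.sum_congr rfl
    intro v hv
    rw [← hS v hv]
    unfold dg bipartiteAbove
    congr 1
    ext w
    simp only [mem_filter, mem_univ, true_and]
    exact ⟨fun h => ⟨hSTa v hv w h, h⟩, fun h => h.2⟩
  rw [c1, ← Finset.sum_add_distrib]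
  calc ∑ w ∈ T, (#{v ∈ S | H.Adj v w} + #{u | u ∉ S ∧ G.Adj w u}) ≤ ∑ w ∈ T, dg H w := by
        apply Finset.sum_le_sum
        intro w hw
        rw [← Finset.card_union_of_disjoint]
        · unfold dg
          apply Finset.card_le_card
          intro u hu
          simp only [mem_union, mem_filter, mem_univ, true_and] at *
          rcases hu with hu | hu
          · exact hu.2.symm
          · by_contra h
            exact hu.1 (hTS w hw u hu.2 h)
        · rw [Finset.disjoint_left]
          intro u h1 h2
          simp only [mem_filter, mem_univ, true_and] at *
          exact h2.1 h1.1
    _ < ∑ w ∈ T, a := Finset.sum_lt_sum hT ⟨v0, hv0T, hv0⟩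
    _ = a * #T := by simp [mul_comm]

end Factor

section Bounds

variable {V : Type*} [Fintype V] [DecidableEq V]

lemma swap_aux (G : SimpleGraph V) [DecidableRel G.Adj] (C T : Finset V) (x : V → ℝ) :
    ∑ w ∈ C, ∑ v ∈ T with G.Adj w v, x v = ∑ v ∈ T, (#{w ∈ C | G.Adj v w} : ℝ) * x v := by
  simp only [Finset.sum_filter]
  rw [Finset.sum_comm]
  apply Finset.sum_congr rfl
  intro v _
  rw [← Finset.sum_filter, Finset.sum_const, nsmul_eq_mul]
  simp only [G.adj_comm]

lemma split_aux (G : SimpleGraph V) [DecidableRel G.Adj] (C : Finset V) (x : V → ℝ) (w : V) :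
    ∑ j with G.Adj w j, x j = ∑ v ∈ C with G.Adj w v, x v + ∑ v ∈ Cᶜ with G.Adj w v, x v := by
  rw [← Finset.sum_union]
  · apply Finset.sum_congr _ (fun _ _ => rfl)
    ext j
    simp only [mem_filter, mem_univ, true_and, mem_union, mem_compl]
    tauto
  · rw [Finset.disjoint_left]
    intro j
    simp only [mem_filter, mem_compl]
    tauto

lemma hong [Nonempty V] (G : SimpleGraph V) [DecidableRel G.Adj]
    (hd : ∀ v, 1 ≤ #{w | G.Adj v w}) :
    G.spectralRadius ^ 2 + (Fintype.card V : ℝ) - 1 ≤ ∑ v, (#{w | G.Adj v w} : ℝ) := by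
  obtain ⟨x, hx0, ⟨i0, hi0⟩, hx⟩ := exists_perron G
  obtain ⟨v, -, hv⟩ := Finset.exists_max_image univ x univ_nonempty
  have hM : 0 < x v := lt_of_lt_of_le hi0 (hv i0 (mem_univ _))
  have h1 : G.spectralRadius ^ 2 * x v ≤ (∑ u with G.Adj v u, (#{w | G.Adj u w} : ℝ)) * x v := by
    calc G.spectralRadius ^ 2 * x v = G.spectralRadius * ∑ u with G.Adj v u, x u := by
          rw [hx]; ring
      _ = ∑ u with G.Adj v u, ∑ w with G.Adj u w, x w := by
          rw [Finset.mul_sum]; exact Finset.sum_congr rfl fun u _ => (hx u).symm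
      _ ≤ ∑ u with G.Adj v u, ∑ w with G.Adj u w, x v := by
          apply Finset.sum_le_sum; intro u _; apply Finset.sum_le_sum
          intro w _; exact hv w (mem_univ _)
      _ = _ := by simp [Finset.sum_mul]
  have h2 := le_of_mul_le_mul_right h1 hM
  have h3 : ∑ u with G.Adj v u, #{w | G.Adj u w} + (Fintype.card V - 1) ≤
      ∑ v, #{w | G.Adj v w} := by
    rw [← Finset.sum_filter_add_sum_filter_not univ (fun u => G.Adj v u)]
    gcongr
    have hvm : v ∈ univ.filter (fun u => ¬ G.Adj v u) := by simp
    rw [← Finset.add_sum_erase _ _ hvm]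
    have h4 : #((univ.filter (fun u => ¬ G.Adj v u)).erase v) ≤
        ∑ u ∈ (univ.filter (fun u => ¬ G.Adj v u)).erase v, #{w | G.Adj u w} := by
      rw [Finset.card_eq_sum_ones]
      exact Finset.sum_le_sum fun u _ => hd u
    rw [Finset.card_erase_of_mem hvm] at h4
    have h5 := Finset.card_filter_add_card_filter_not (s := (univ : Finset V)) (fun u => G.Adj v u)
    rw [Finset.card_univ] at h5
    omega
  have h6 : 1 ≤ Fintype.card V := Fintype.card_pos
  have h7 : ((∑ u with G.Adj v u, #{w | G.Adj u w} + (Fintype.card V - 1) : ℕ) : ℝ) ≤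
      ((∑ v, #{w | G.Adj v w} : ℕ) : ℝ) := by exact_mod_cast h3
  push_cast [h6] at h7
  linarith

lemma lower [Nonempty V] (G : SimpleGraph V) [DecidableRel G.Adj] (C : Finset V)
    (hC : ∀ i ∈ C, ∀ j ∈ C, i ≠ j → G.Adj i j) (hC2 : 2 ≤ #C) (k : V → ℕ)
    (hk : ∀ v ∉ C, k v ≤ #{w ∈ C | G.Adj v w}) (hk1 : ∀ v ∉ C, 1 ≤ k v) :
    (#C : ℝ) - 1 ≤ G.spectralRadius ∧
    ∑ v ∈ Cᶜ, (k v : ℝ) ^ 2 ≤ G.spectralRadius * (G.spectralRadius + 1) *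
      (G.spectralRadius + 1 - #C) := by
  obtain ⟨x, hx0, ⟨i0, hi0⟩, hx⟩ := exists_perron G
  set l := G.spectralRadius
  set X := ∑ w ∈ C, x w with hX
  have hw : ∀ w ∈ C, X + ∑ v ∈ Cᶜ with G.Adj w v, x v = (l + 1) * x w := by
    intro w hw
    rw [add_mul, ← hx w, split_aux G C x w]
    have : (C.filter fun v => G.Adj w v) = C.erase w := by
      ext v
      simp only [mem_filter, mem_erase]
      exact ⟨fun h => ⟨h.2.ne', h.1⟩, fun h => ⟨h.2, hC w hw v h.2 h.1.symm⟩⟩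
    rw [this, hX, ← Finset.add_sum_erase _ _ hw]
    ring
  have hnn : ∀ w, 0 ≤ ∑ v ∈ Cᶜ with G.Adj w v, x v := fun w => Finset.sum_nonneg fun v _ => hx0 v
  have hXnn : 0 ≤ X := Finset.sum_nonneg fun v _ => hx0 v
  have hXpos : 0 < X := by
    rcases hXnn.lt_or_eq with h | h
    · exact h
    exfalso
    have hz : ∀ w ∈ C, x w = 0 := (Finset.sum_eq_zero_iff_of_nonneg fun v _ => hx0 v).1 h.symm
    have hi : i0 ∉ C := fun hi => by rw [hz i0 hi] at hi0; exact lt_irrefl _ hi0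
    have h1 : 0 < #{w ∈ C | G.Adj i0 w} := lt_of_lt_of_le (hk1 i0 hi) (hk i0 hi)
    obtain ⟨w, hw'⟩ := Finset.card_pos.1 h1
    rw [mem_filter] at hw'
    have h2 := hx w
    rw [hz w hw'.1, mul_zero] at h2
    have h3 := (Finset.sum_eq_zero_iff_of_nonneg fun v _ => hx0 v).1 h2 i0
      (by simpa using hw'.2.symm)
    linarith
  have hsum : (l + 1) * X = #C * X + ∑ v ∈ Cᶜ, (#{w ∈ C | G.Adj v w} : ℝ) * x v := by
    rw [← swap_aux, hX, Finset.mul_sum, ← Finset.sum_congr rfl hw, Finset.sum_add_distrib]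
    simp [hX]
  have hnn2 : 0 ≤ ∑ v ∈ Cᶜ, (#{w ∈ C | G.Adj v w} : ℝ) * x v :=
    Finset.sum_nonneg fun v _ => mul_nonneg (Nat.cast_nonneg _) (hx0 v)
  have hl : (#C : ℝ) ≤ l + 1 := by
    have : #C * X ≤ (l + 1) * X := by linarith
    exact le_of_mul_le_mul_right this hXpos
  have hC2' : (2 : ℝ) ≤ #C := by exact_mod_cast hC2
  have hlpos : 0 < l := by linarith
  refine ⟨by linarith, ?_⟩
  have hv : ∀ v ∈ Cᶜ, (k v : ℝ) * X ≤ l * (l + 1) * x v := by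
    intro v hv
    have hvC : v ∉ C := by simpa using hv
    calc (k v : ℝ) * X ≤ (#{w ∈ C | G.Adj v w} : ℝ) * X := by
          gcongr; exact_mod_cast hk v hvC
      _ = ∑ w ∈ C with G.Adj v w, X := by simp
      _ ≤ ∑ w ∈ C with G.Adj v w, (l + 1) * x w := by
          apply Finset.sum_le_sum
          intro w h
          rw [← hw w (mem_filter.1 h).1]
          linarith [hnn w]
      _ ≤ (l + 1) * ∑ w with G.Adj v w, x w := by
          rw [← Finset.mul_sum, split_aux G C x v]
          have := hnn v
          gcongr
          linarith
      _ = _ := by rw [hx]; ring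
  have : (∑ v ∈ Cᶜ, (k v : ℝ) ^ 2) * X ≤ (l * (l + 1) * (l + 1 - #C)) * X := by
    calc (∑ v ∈ Cᶜ, (k v : ℝ) ^ 2) * X = ∑ v ∈ Cᶜ, (k v : ℝ) * (k v * X) := by
          rw [Finset.sum_mul]; exact Finset.sum_congr rfl fun v _ => by ring
      _ ≤ ∑ v ∈ Cᶜ, (#{w ∈ C | G.Adj v w} : ℝ) * (l * (l + 1) * x v) := by
          apply Finset.sum_le_sum
          intro v h
          have hvC : v ∉ C := by simpa using h
          have h1 : (k v : ℝ) ≤ #{w ∈ C | G.Adj v w} := by exact_mod_cast hk v hvC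
          exact mul_le_mul h1 (hv v h) (by positivity) (by positivity)
      _ = l * (l + 1) * ∑ v ∈ Cᶜ, (#{w ∈ C | G.Adj v w} : ℝ) * x v := by
          rw [Finset.mul_sum]; exact Finset.sum_congr rfl fun v _ => by ring
      _ = l * (l + 1) * ((l + 1) * X - #C * X) := by rw [hsum]; ring
      _ = _ := by ring
  exact le_of_mul_le_mul_right this hXpos

set_option maxHeartbeats 1000000 in
lemma upper [Nonempty V] (G : SimpleGraph V) [DecidableRel G.Adj] (T : Finset V)
    (hl0 : 0 < G.spectralRadius)
    (hT : ∀ v ∈ T, (#{w | G.Adj v w} : ℝ) < G.spectralRadius)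
    (hD : ∑ v ∈ T, (#{w | G.Adj v w} : ℝ) < G.spectralRadius ^ 2 + G.spectralRadius) :
    (G.spectralRadius + 1 - #Tᶜ) * (G.spectralRadius ^ 2 + G.spectralRadius -
      ∑ v ∈ T, (#{w | G.Adj v w} : ℝ)) ≤ ∑ v ∈ T, (#{w | G.Adj v w} : ℝ) ^ 2 := by
  obtain ⟨x, hx0, ⟨i0, hi0⟩, hx⟩ := exists_perron G
  set l := G.spectralRadius
  obtain ⟨m, -, hm⟩ := Finset.exists_max_image univ x univ_nonempty
  have hm : ∀ i, x i ≤ x m := fun i => hm i (mem_univ _)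
  have hM : 0 < x m := lt_of_lt_of_le hi0 (hm i0)
  set M := x m with hMdef
  have hdv : ∀ v, l * x v ≤ (#{w | G.Adj v w} : ℝ) * M := by
    intro v
    rw [← hx v]
    calc _ ≤ ∑ j with G.Adj v j, M := Finset.sum_le_sum fun j _ => hm j
      _ = _ := by simp
  have hmT : m ∉ T := by
    intro h
    have h1 := hdv m
    have h2 := hT m h
    have := mul_lt_mul_of_pos_right h2 hM
    linarith
  set C := Tᶜ with hC
  have hCT : Cᶜ = T := by simp [hC]
  set X := ∑ w ∈ C, x w with hX
  have hw : ∀ w ∈ C, (l + 1) * x w ≤ X + ∑ v ∈ T with G.Adj w v, x v := by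
    intro w hw
    rw [add_mul, ← hx w, split_aux G C x w, hCT]
    have : ∑ v ∈ C with G.Adj w v, x v ≤ ∑ v ∈ C.erase w, x v := by
      apply Finset.sum_le_sum_of_subset_of_nonneg
      · intro v
        simp only [mem_filter, mem_erase]
        exact fun h => ⟨h.2.ne', h.1⟩
      · exact fun i _ _ => hx0 i
    have h2 := Finset.add_sum_erase _ x hw
    linarith
  have hsum : (l + 1) * X ≤ #C * X + ∑ v ∈ T, (#{w ∈ C | G.Adj v w} : ℝ) * x v := by
    rw [← swap_aux]
    calc (l + 1) * X = ∑ w ∈ C, (l + 1) * x w := by rw [hX, Finset.mul_sum]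
      _ ≤ ∑ w ∈ C, (X + ∑ v ∈ T with G.Adj w v, x v) := Finset.sum_le_sum hw
      _ = _ := by rw [Finset.sum_add_distrib]; simp
  have h1 : l * ((l + 1) - #C) * X ≤ (∑ v ∈ T, (#{w | G.Adj v w} : ℝ) ^ 2) * M := by
    calc l * ((l + 1) - #C) * X = l * ((l + 1) * X - #C * X) := by ring
      _ ≤ l * ∑ v ∈ T, (#{w ∈ C | G.Adj v w} : ℝ) * x v := by gcongr; linarith
      _ ≤ l * ∑ v ∈ T, (#{w | G.Adj v w} : ℝ) * x v := by
          apply mul_le_mul_of_nonneg_left _ hl0.le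
          apply Finset.sum_le_sum
          intro v _
          apply mul_le_mul_of_nonneg_right _ (hx0 v)
          exact_mod_cast Finset.card_le_card (Finset.filter_subset_filter _ (Finset.subset_univ _))
      _ = ∑ v ∈ T, (#{w | G.Adj v w} : ℝ) * (l * x v) := by
          rw [Finset.mul_sum]; exact Finset.sum_congr rfl fun v _ => by ring
      _ ≤ ∑ v ∈ T, (#{w | G.Adj v w} : ℝ) * ((#{w | G.Adj v w} : ℝ) * M) := by
          exact Finset.sum_le_sum fun v _ => mul_le_mul_of_nonneg_left (hdv v) (Nat.cast_nonneg _)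
      _ = _ := by rw [Finset.sum_mul]; exact Finset.sum_congr rfl fun v _ => by ring
  have h2 : (l ^ 2 + l - ∑ v ∈ T, (#{w | G.Adj v w} : ℝ)) * M ≤ l * X := by
    have h3 := hw m (by simpa [hC] using hmT)
    have h4 : l * ∑ v ∈ T with G.Adj m v, x v ≤ (∑ v ∈ T, (#{w | G.Adj v w} : ℝ)) * M := by
      calc l * ∑ v ∈ T with G.Adj m v, x v ≤ l * ∑ v ∈ T, x v := by
            gcongr
            · exact fun i _ _ => hx0 i
            · exact Finset.filter_subset _ _
        _ ≤ _ := by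
          rw [Finset.mul_sum, Finset.sum_mul]
          exact Finset.sum_le_sum fun v _ => hdv v
    have h5 := mul_le_mul_of_nonneg_left h3 hl0.le
    rw [← hMdef] at h5
    nlinarith
  set D := ∑ v ∈ T, (#{w | G.Adj v w} : ℝ)
  set Q := ∑ v ∈ T, (#{w | G.Adj v w} : ℝ) ^ 2
  have hQ : 0 ≤ Q := Finset.sum_nonneg fun v _ => by positivity
  have hlX : 0 < l * X := lt_of_lt_of_le (mul_pos (by linarith) hM) h2
  have h6 : ((l + 1 - #C) * (l ^ 2 + l - D)) * (l * X) ≤ Q * (l * X) := by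
    calc _ = (l * ((l + 1) - #C) * X) * (l ^ 2 + l - D) := by ring
      _ ≤ (Q * M) * (l ^ 2 + l - D) := mul_le_mul_of_nonneg_right h1 (by linarith)
      _ = Q * ((l ^ 2 + l - D) * M) := by ring
      _ ≤ _ := mul_le_mul_of_nonneg_left h2 hQ
  exact le_of_mul_le_mul_right h6 hlX

end Bounds

section Assembly

lemma card_fin_lt {n k : ℕ} (h : k ≤ n) : #{i : Fin n | (i : ℕ) < k} = k := by
  rw [Fin.card_filter_val_lt]; omega

lemma Hgraph_adj (n a b : ℕ) (i j : Fin n) : (Hgraph n a b).Adj i j ↔ i ≠ j ∧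
    (((i : ℕ) < a ∨ ((i : ℕ) < n - b - 1 ∧ (j : ℕ) < n - b - 1) ∨
    ((i : ℕ) = n - b - 1 ∧ a ≤ (j : ℕ) ∧ (j : ℕ) < 2 * a - 1)) ∨
    ((j : ℕ) < a ∨ ((j : ℕ) < n - b - 1 ∧ (i : ℕ) < n - b - 1) ∨
    ((j : ℕ) = n - b - 1 ∧ a ≤ (i : ℕ) ∧ (i : ℕ) < 2 * a - 1))) := by
  unfold Hgraph
  rw [SimpleGraph.fromRel_adj]

lemma H_lower (a b n : ℕ) (ha : 0 < a) (hn : 2 * a + b + 2 ≤ n) :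
    (n : ℝ) - b - 2 < (Hgraph n a b).spectralRadius ∧
    (b : ℝ) * a ^ 2 + (2 * a - 1) ^ 2 ≤ (Hgraph n a b).spectralRadius *
      ((Hgraph n a b).spectralRadius + 1) * ((Hgraph n a b).spectralRadius + 1 - (n - b - 1)) := by
  classical
  haveI : Nonempty (Fin n) := ⟨⟨0, by omega⟩⟩
  set C : Finset (Fin n) := univ.filter (fun i => (i : ℕ) < n - b - 1) with hC
  have hCc : #C = n - b - 1 := card_fin_lt (by omega)
  have hCr : (#C : ℝ) = n - b - 1 := by
    rw [hCc, Nat.sub_sub, Nat.cast_sub (by omega)]; push_cast; ring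
  set k : Fin n → ℕ := fun v => if (v : ℕ) = n - b - 1 then 2 * a - 1 else a with hk
  have hl := lower (Hgraph n a b) C ?_ (by omega) k ?_ ?_
  · obtain ⟨h1, h2⟩ := hl
    rw [hCr] at h1 h2
    have h3 : ∑ v ∈ Cᶜ, (k v : ℝ) ^ 2 = (b : ℝ) * a ^ 2 + (2 * a - 1) ^ 2 := by
      have hm : (⟨n - b - 1, by omega⟩ : Fin n) ∈ Cᶜ := by simp [hC]; omega
      rw [← Finset.add_sum_erase _ _ hm]
      have h4 : ∀ v ∈ Cᶜ.erase (⟨n - b - 1, by omega⟩ : Fin n), (k v : ℝ) ^ 2 = a ^ 2 := by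
        intro v hv
        have hv' : (v : ℕ) ≠ n - b - 1 := by
          intro h
          apply (mem_erase.1 hv).1
          ext; exact h
        simp [hk, hv']
      rw [Finset.sum_congr rfl h4, Finset.sum_const, Finset.card_erase_of_mem hm,
        Finset.card_compl, hCc, Fintype.card_fin]
      have h5 : n - (n - b - 1) - 1 = b := by omega
      rw [h5, nsmul_eq_mul]
      simp only [hk, if_true]
      rw [Nat.cast_sub (by omega)]
      push_cast; ring
    rw [h3] at h2
    refine ⟨?_, h2⟩
    rcases h1.lt_or_eq with h | h
    · linarith
    · exfalso
      rw [← h] at h2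
      have ha' : (1 : ℝ) ≤ a := by exact_mod_cast ha
      nlinarith [show (0 : ℝ) ≤ b * a ^ 2 by positivity]
  · intro i hi j hj hij
    rw [Hgraph_adj]
    simp only [hC, mem_filter, mem_univ, true_and] at hi hj
    exact ⟨hij, Or.inl (Or.inr (Or.inl ⟨hi, hj⟩))⟩
  · intro v hv
    have hv' : n - b - 1 ≤ (v : ℕ) := by simpa [hC] using hv
    have hne : ∀ w : Fin n, (w : ℕ) < n - b - 1 → v ≠ w := by
      rintro w hw rfl; omega
    simp only [hk]
    split_ifs with h
    · rw [← card_fin_lt (n := n) (k := 2 * a - 1) (by omega)]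
      apply Finset.card_le_card
      intro w hw
      simp only [hC, mem_filter, mem_univ, true_and, Hgraph_adj] at *
      refine ⟨by omega, hne w (by omega), ?_⟩
      omega
    · conv_lhs => rw [← card_fin_lt (n := n) (k := a) (by omega)]
      apply Finset.card_le_card
      intro w hw
      simp only [hC, mem_filter, mem_univ, true_and, Hgraph_adj] at *
      refine ⟨by omega, hne w (by omega), ?_⟩
      omega
  · intro v hv
    simp only [hk]
    split_ifs <;> omega

lemma exists_equiv {V W : Type*} [Fintype V] [Fintype W] {K : Type*} [DecidableEq K]
    (c : V → K) (c' : W → K) (h : ∀ k, #{v | c v = k} = #{w | c' w = k}) :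
    ∃ e : V ≃ W, ∀ v, c' (e v) = c v := by
  classical
  have h' : ∀ k, Fintype.card {v // c v = k} = Fintype.card {w // c' w = k} := by
    intro k
    rw [Fintype.card_subtype, Fintype.card_subtype]; exact h k
  refine ⟨(Equiv.sigmaFiberEquiv c).symm.trans ((Equiv.sigmaCongrRight
    (fun k => Fintype.equivOfCardEq (h' k))).trans (Equiv.sigmaFiberEquiv c')), fun v => ?_⟩
  simp [Equiv.sigmaFiberEquiv]
  exact (Fintype.equivOfCardEq (h' (c v)) ⟨v, rfl⟩).2

lemma iso_of_le {V : Type*} [Fintype V] [DecidableEq V] (G H : SimpleGraph V)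
    (e : V ≃ V) (hle : ∀ u v, G.Adj u v → H.Adj (e u) (e v)) (hconn : G.Connected)
    (hρ : H.spectralRadius ≤ G.spectralRadius) : Nonempty (G ≃g H) := by
  classical
  haveI := hconn.nonempty
  obtain ⟨x, hx0, ⟨i0, hi0⟩, hx⟩ := exists_perron G
  have hpos : ∀ v, 0 < x v := by
    have hstep : ∀ u v, G.Adj u v → 0 < x u → 0 < x v := by
      intro u v huv hu
      by_contra h
      have hv : x v = 0 := le_antisymm (not_lt.1 h) (hx0 v)
      have h1 := hx v
      rw [hv, mul_zero] at h1
      have h2 := (Finset.sum_eq_zero_iff_of_nonneg fun w _ => hx0 w).1 h1 u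
        (by simpa using huv.symm)
      linarith
    intro v
    obtain ⟨p⟩ := hconn.preconnected i0 v
    induction p with
    | nil => exact hi0
    | cons h p ih => exact ih (hstep _ _ h hi0)
  refine ⟨⟨e, ?_⟩⟩
  intro u v
  refine ⟨fun huv => ?_, hle u v⟩
  by_contra hn
  have h1 := rayleigh H (fun i => x (e.symm i))
  have h2 : ∑ i, x (e.symm i) * ∑ j with H.Adj i j, x (e.symm j) =
      ∑ u, x u * ∑ v with H.Adj (e u) (e v), x v := by
    rw [← Equiv.sum_comp e]
    apply Finset.sum_congr rfl
    intro u _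
    rw [Equiv.symm_apply_apply, Finset.sum_filter, Finset.sum_filter, ← Equiv.sum_comp e]
    simp
  have h3 : ∑ i, x (e.symm i) ^ 2 = ∑ u, x u ^ 2 := by
    rw [← Equiv.sum_comp e]; simp
  rw [h2, h3] at h1
  have h4 : ∑ u, x u * ∑ v with G.Adj u v, x v = G.spectralRadius * ∑ u, x u ^ 2 := by
    rw [Finset.mul_sum]
    apply Finset.sum_congr rfl
    intro u _
    rw [hx]; ring
  have h5 : ∑ u, x u * ∑ v with G.Adj u v, x v < ∑ u, x u * ∑ v with H.Adj (e u) (e v), x v := by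
    have hsub : ∀ u, (univ.filter fun v => G.Adj u v) ⊆ univ.filter fun v => H.Adj (e u) (e v) := by
      intro u w
      simp only [mem_filter, mem_univ, true_and]
      exact hle u w
    apply Finset.sum_lt_sum
    · intro u _
      apply mul_le_mul_of_nonneg_left _ (hx0 u)
      exact Finset.sum_le_sum_of_subset_of_nonneg (hsub u) fun i _ _ => hx0 i
    · refine ⟨u, mem_univ _, ?_⟩
      apply mul_lt_mul_of_pos_left _ (hpos u)
      exact Finset.sum_lt_sum_of_subset (hsub u) (i := v) (by simpa using huv) (by simpa using hn)
        (hpos v) fun j _ _ => hx0 j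
  have h6 : 0 ≤ ∑ u, x u ^ 2 := Finset.sum_nonneg fun u _ => sq_nonneg _
  have := mul_le_mul_of_nonneg_right hρ h6
  linarith

lemma iso_case (a b n : ℕ) (ha : 0 < a) (hn : 2 * a + b + 2 ≤ n)
    (G : SimpleGraph (Fin n)) [DecidableRel G.Adj] (S T : Finset (Fin n)) (hST : Disjoint S T)
    (hS : #S = a) (hT : #T = b + 1) (v1 : Fin n) (hv1 : v1 ∈ T)
    (hN : ∀ v ∈ T, v ≠ v1 → ∀ w, G.Adj v w → w ∈ S)
    (hNv : #{w | w ∉ S ∧ G.Adj v1 w} = a - 1) :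
    ∃ e : Fin n ≃ Fin n, ∀ u v, G.Adj u v → (Hgraph n a b).Adj (e u) (e v) := by
  rw [Finset.disjoint_left] at hST
  let c : Fin n → Fin 5 := fun u => if u ∈ S then 0 else if u = v1 then 1 else if u ∈ T then 2
    else if G.Adj v1 u then 3 else 4
  let c' : Fin n → Fin 5 := fun i => if (i : ℕ) < a then 0 else if (i : ℕ) = n - b - 1 then 1 else
    if n - b - 1 < (i : ℕ) then 2 else if (i : ℕ) < 2 * a - 1 then 3 else 4
  have hv1S : v1 ∉ S := fun h => hST h hv1
  have hTv1 : ∀ w ∈ T, ¬ G.Adj v1 w := by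
    intro w hw h
    exact hv1S (hN w hw h.ne' v1 h.symm)
  have c0 : (univ.filter fun u => c u = 0) = S := by
    ext u; simp only [c, mem_filter, mem_univ, true_and]; split_ifs <;> simp_all
  have c1 : (univ.filter fun u => c u = 1) = {v1} := by
    ext u; simp only [c, mem_filter, mem_univ, true_and, mem_singleton]
    split_ifs <;> simp_all
    rintro rfl; simp_all
  have c2 : (univ.filter fun u => c u = 2) = T.erase v1 := by
    ext u; simp only [c, mem_filter, mem_univ, true_and, mem_erase]
    have := @hST u
    split_ifs <;> simp_all
  have c3 : (univ.filter fun u => c u = 3) = univ.filter fun w => w ∉ S ∧ G.Adj v1 w := by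
    ext u; simp only [c, mem_filter, mem_univ, true_and]
    have := hTv1 u
    split_ifs <;> simp_all
  have d0 : #(univ.filter fun u => c' u = 0) = a := by
    refine Eq.trans ?_ (card_fin_lt (n := n) (k := a) (by omega))
    congr 1
    ext u; simp only [c', mem_filter, mem_univ, true_and]
    split_ifs <;> simp_all
  have d1 : #(univ.filter fun u => c' u = 1) = 1 := by
    have : (univ.filter fun u => c' u = 1) = {(⟨n - b - 1, by omega⟩ : Fin n)} := by
      ext u; simp only [c', mem_filter, mem_univ, true_and, mem_singleton, Fin.ext_iff]
      split_ifs <;> simp_all; omega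
    rw [this]; simp
  have d2 : #(univ.filter fun u => c' u = 2) = b := by
    have : (univ.filter fun u => c' u = 2) = (univ.filter fun u : Fin n => (u : ℕ) < n - b)ᶜ := by
      ext u; simp only [c', mem_filter, mem_univ, true_and, mem_compl]
      split_ifs <;> simp_all <;> omega
    rw [this, Finset.card_compl, card_fin_lt (by omega), Fintype.card_fin]; omega
  have d3 : #(univ.filter fun u => c' u = 3) = a - 1 := by
    have : (univ.filter fun u => c' u = 3) = (univ.filter fun u : Fin n => (u : ℕ) < 2 * a - 1) \
       (univ.filter fun u : Fin n => (u : ℕ) < a) := by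
      ext u; simp only [c', mem_filter, mem_univ, true_and, mem_sdiff]
      split_ifs <;> simp_all <;> omega
    rw [this, Finset.card_sdiff_of_subset, card_fin_lt (by omega), card_fin_lt (by omega)]
    · omega
    · intro u; simp only [mem_filter, mem_univ, true_and]; omega
  have e0 : #(univ.filter fun u => c u = 0) = a := by rw [c0, hS]
  have e1 : #(univ.filter fun u => c u = 1) = 1 := by rw [c1]; simp
  have e2 : #(univ.filter fun u => c u = 2) = b := by
    rw [c2, Finset.card_erase_of_mem hv1, hT]; omega
  have e3 : #(univ.filter fun u => c u = 3) = a - 1 := by rw [c3, hNv]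
  have s1 := Finset.card_eq_sum_card_fiberwise (s := univ) (t := univ) (f := c)
    (fun _ _ => by simp)
  have s2 := Finset.card_eq_sum_card_fiberwise (s := univ) (t := univ) (f := c')
    (fun _ _ => by simp)
  rw [Fin.sum_univ_five] at s1 s2
  have hc : ∀ k, #{v | c v = k} = #{w | c' w = k} := by
    intro k
    fin_cases k
    · exact e0.trans d0.symm
    · exact e1.trans d1.symm
    · exact e2.trans d2.symm
    · exact e3.trans d3.symm
    · change #{v | c v = 4} = #{w | c' w = 4}
      omega
  obtain ⟨e, he⟩ := exists_equiv c c' hc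
  refine ⟨e, ?_⟩
  have hS' : ∀ u ∈ S, ((e u : Fin n) : ℕ) < a := by
    intro u hu
    have := he u
    simp only [c, c', hu, if_true] at this
    by_contra h
    simp only [h, if_false] at this
    split_ifs at this <;> simp at this
  have hW' : ∀ u, u ∉ T → ((e u : Fin n) : ℕ) < n - b - 1 := by
    intro u hu
    have := he u
    have hne : u ≠ v1 := fun h => hu (h ▸ hv1)
    simp only [c, c', hu, hne, if_false] at this
    by_contra h
    split_ifs at this <;> first | (simp at this; done) | omega
  have hv' : ((e v1 : Fin n) : ℕ) = n - b - 1 := by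
    have := he v1
    simp only [c, c', hv1S, if_false, if_true] at this
    by_contra h
    simp only [h, if_false] at this
    split_ifs at this <;> simp at this
  have hA' : ∀ u, u ∉ S → G.Adj v1 u →
      a ≤ ((e u : Fin n) : ℕ) ∧ ((e u : Fin n) : ℕ) < 2 * a - 1 := by
    intro u hu h
    have := he u
    have h1 : u ≠ v1 := h.ne'
    have h2 : u ∉ T := fun hu => hTv1 u hu h
    simp only [c, c', hu, h1, h2, h, if_false, if_true] at this
    split_ifs at this <;> first | (simp at this; done) | omega
  have main : ∀ u v, G.Adj u v → u ∈ T → (Hgraph n a b).Adj (e u) (e v) := by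
    intro u v huv hu
    rw [Hgraph_adj]
    refine ⟨fun h => huv.ne (e.injective h), ?_⟩
    by_cases hvS : v ∈ S
    · have := hS' v hvS; omega
    · by_cases h1 : u = v1
      · subst h1
        have := hA' v hvS huv
        omega
      · exact absurd (hN u hu h1 v huv) hvS
  intro u v huv
  by_cases hu : u ∈ T
  · exact main u v huv hu
  by_cases hv : v ∈ T
  · exact (main v u huv.symm hv).symm
  rw [Hgraph_adj]
  refine ⟨fun h => huv.ne (e.injective h), ?_⟩
  have := hW' u hu
  have := hW' v hv
  omega

end Assembly

section Main

lemma num_large (a b n s t σ : ℝ) (ha : 1 ≤ a) (hab : a + 1 ≤ b)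
    (hn : 2 * (a + b + 2) * (b + 2) ≤ n) (ht : b + 2 ≤ t) (hs0 : 0 ≤ s) (hst : s ≤ t)
    (hstn : s + t ≤ n) (hσ : b * s + σ + 1 ≤ a * t) :
    s * (n - 1) + (t * s + σ) + ((n - s - t) * (n - t - 1) + σ) ≤ (n - b - 2) ^ 2 + n - 1 := by
  have h1 : s * (n - 1) + (t * s + σ) + ((n - s - t) * (n - t - 1) + σ) ≤
      (n - t) * (n - t - 1) + 2 * ((t - b) * s) + 2 * (a * t) - 2 := by nlinarith
  refine h1.trans ?_
  by_cases h : 2 * t ≤ n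
  · have h2 : (t - b) * s ≤ (t - b) * t := mul_le_mul_of_nonneg_left hst (by linarith)
    have h3 : a * t ≤ b * t := mul_le_mul_of_nonneg_right (by linarith) (by linarith)
    obtain ⟨c, hc⟩ : ∃ c, c = b + 2 := ⟨_, rfl⟩
    obtain ⟨k, hk⟩ : ∃ k, t = c + k := ⟨t - c, by ring⟩
    have hb : b = c - 2 := by linarith
    subst hb
    subst hk
    have hk0 : 0 ≤ k := by linarith
    have hc4 : 4 ≤ c := by linarith
    have hn2 : 2 * c * c + 2 * c ≤ n := by nlinarith
    have h4 : 0 ≤ 2 * n - 2 * c ^ 2 - c + 1 := by nlinarith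
    have h5 : 0 ≤ k * (2 * n - 2 * c - k - 1 - 4 * c - 2 * k) := by
      apply mul_nonneg hk0
      nlinarith
    nlinarith
  · have h2 : (t - b) * s ≤ (t - b) * (n - t) := mul_le_mul_of_nonneg_left (by linarith) (by linarith)
    have hn2 : 8 * (a + b + 2) ≤ n := by nlinarith
    have h3 : n / 2 * (n / 2 - 2 * a) ≤ t * (t - 2 * a) :=
      mul_le_mul (by linarith) (by linarith) (by linarith) (by linarith)
    have h4 : 2 * (b + 2) * n ≤ n / 2 * (n / 2 - 2 * a) := by
      have : 0 ≤ n * (n / 4 - a - 2 * (b + 2)) := mul_nonneg (by linarith) (by linarith)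
      nlinarith
    have h5 : 0 ≤ (1 + 2 * b) * (n - t) := mul_nonneg (by linarith) (by linarith)
    nlinarith

lemma num_small (a b n l z D Q : ℝ) (ha : 2 ≤ a) (hab : a + 1 ≤ b)
    (hn : 2 * (a + b + 2) * (b + 2) ≤ n) (hl : n - b - 2 ≤ l)
    (hD0 : 0 ≤ D) (hD : D ≤ a * (b + 2) - 1)
    (hQ : Q ≤ (b + 1) * a ^ 2 + (3 * a - 2) * (a - 1))
    (hup : z * (l ^ 2 + l - D) ≤ Q)
    (hlo : b * a ^ 2 + (2 * a - 1) ^ 2 ≤ l * (l + 1) * z) : False := by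
  have ha0 : 0 < a := by linarith
  have hb0 : 0 < b := by linarith
  have ha1 : 0 < a - 1 := by linarith
  have h0 : (2 * a + 2 * b + 3) * (b + 2) ≤ l := by nlinarith
  have h0' : 0 ≤ (2 * a + 2 * b + 3) * (b + 2) := by positivity
  have hl2 : ((2 * a + 2 * b + 3) * (b + 2)) ^ 2 ≤ l ^ 2 := by gcongr
  have hlpos : 0 ≤ l := by linarith
  have h1 : (4 * a * (b + 2)) ^ 2 ≤ l ^ 2 := by
    refine le_trans ?_ hl2
    gcongr
    linarith
  set L := l ^ 2 + l with hL
  have hL1 : (4 * a * (b + 2)) ^ 2 ≤ L := by linarith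
  have hLD : 0 ≤ L - D := by nlinarith
  set P := b * a ^ 2 + (2 * a - 1) ^ 2 with hP
  have hlo' : P ≤ L * z := by rw [hL]; nlinarith
  have h2 : P * (L - D) ≤ Q * L := by
    calc P * (L - D) ≤ (L * z) * (L - D) := mul_le_mul_of_nonneg_right hlo' hLD
      _ = (z * (L - D)) * L := by ring
      _ ≤ Q * L := mul_le_mul_of_nonneg_right hup (by positivity)
  have h3 : a - 1 ≤ P - Q := by rw [hP]; nlinarith
  have hPle : P ≤ a ^ 2 * (b + 4) := by rw [hP]; nlinarith
  have hP0 : 0 ≤ P := by positivity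
  have h4 : (a - 1) * L ≤ P * D := by
    have : (a - 1) * L ≤ (P - Q) * L := mul_le_mul_of_nonneg_right h3 (by positivity)
    nlinarith
  have h5 : P * D ≤ (a ^ 2 * (b + 4)) * (a * (b + 2)) :=
    mul_le_mul hPle (by linarith) hD0 (by positivity)
  have h6 : (a - 1) * (4 * a * (b + 2)) ^ 2 ≤ (a - 1) * L :=
    mul_le_mul_of_nonneg_left hL1 (by linarith)
  have h7 : (a ^ 2 * (b + 4)) * (a * (b + 2)) ≤ a ^ 2 * (2 * (b + 2)) * (2 * (a - 1) * (b + 2)) := by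
    refine mul_le_mul ?_ ?_ (by positivity) (by positivity)
    · exact mul_le_mul_of_nonneg_left (by linarith) (by positivity)
    · exact mul_le_mul_of_nonneg_right (by linarith) (by positivity)
  have h8 : 0 < (a - 1) * (a * (b + 2)) ^ 2 := by
    positivity
  nlinarith

lemma num_l (a b n l : ℝ) (ha : 2 ≤ a) (hab : a + 1 ≤ b)
    (hn : 2 * (a + b + 2) * (b + 2) ≤ n) (hl : n - b - 2 ≤ l) :
    2 * a + 2 * b + 3 ≤ l ∧ a * (b + 2) - 1 < l ^ 2 + l := by
  have ha0 : 0 < a := by linarith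
  have hb0 : 0 < b := by linarith
  have h0 : (2 * a + 2 * b + 3) * (b + 2) ≤ l := by nlinarith
  have h1 : (2 * a + 2 * b + 3) * 1 ≤ (2 * a + 2 * b + 3) * (b + 2) :=
    mul_le_mul_of_nonneg_left (by linarith) (by linarith)
  have h2 : a * (b + 2) ≤ (2 * a + 2 * b + 3) * (b + 2) :=
    mul_le_mul_of_nonneg_right (by linarith) (by linarith)
  refine ⟨by linarith, ?_⟩
  have := sq_nonneg l
  linarith

end Main

set_option maxHeartbeats 4000000

/-- **Theorem 1.1.** Let `a < b` be positive integers and `G` a connected graph of order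
`n ≥ 2(a+b+2)(b+2)` with minimum degree at least `a`. If `ρ(G) ≥ ρ(H_n^{a,b})`, then `G`
contains an `[a,b]`-factor, unless `G ≅ H_n^{a,b}`. -/
theorem spectral_radius_abFactor (a b n : ℕ) (ha : 0 < a) (hab : a < b)
    (hn : 2 * (a + b + 2) * (b + 2) ≤ n)
    (G : SimpleGraph (Fin n)) [DecidableRel G.Adj]
    (hconn : G.Connected) (hδ : ∀ v, a ≤ G.degree v)
    (hρ : (Hgraph n a b).spectralRadius ≤ G.spectralRadius) :
    G.HasABFactor a b ∨ Nonempty (G ≃g Hgraph n a b) := by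
  by_cases hno : G.HasABFactor a b
  · exact Or.inl hno
  right
  obtain ⟨S, T, hST, hlt⟩ := factor_thm G hab hno
  have hn2 : 2 * a + b + 2 ≤ n := by nlinarith
  haveI : Nonempty (Fin n) := ⟨⟨0, by omega⟩⟩
  obtain ⟨hHl, hHQ⟩ := H_lower a b n ha hn2
  set d : Fin n → ℕ := fun v => #{w | G.Adj v w} with hd
  set q : Fin n → ℕ := fun v => #{w | w ∉ S ∧ G.Adj v w} with hq
  set p : Fin n → ℕ := fun v => #{w | w ∈ S ∧ G.Adj v w} with hp
  have hda : ∀ v, a ≤ d v := by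
    intro v
    have h1 := hδ v
    have h2 : G.degree v = d v := by
      rw [← SimpleGraph.card_neighborFinset_eq_degree]
      simp only [hd]
      congr 1
      ext w; simp
    omega
  have hpq : ∀ v, d v = p v + q v := by
    intro v
    simp only [hd, hp, hq]
    rw [← Finset.card_union_of_disjoint]
    · congr 1; ext w; simp only [mem_filter, mem_univ, true_and, mem_union]; tauto
    · rw [Finset.disjoint_left]; intro w; simp only [mem_filter, mem_univ, true_and]; tauto
  have hps : ∀ v, p v ≤ #S := by
    intro v
    apply Finset.card_le_card
    intro w; simp only [mem_filter, mem_univ, true_and]; tauto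
  change b * #S + ∑ v ∈ T, q v < a * #T at hlt
  obtain ⟨s, hs⟩ : ∃ s, s = #S := ⟨_, rfl⟩
  obtain ⟨t, ht⟩ : ∃ t, t = #T := ⟨_, rfl⟩
  obtain ⟨σ, hσ⟩ : ∃ σ, σ = ∑ v ∈ T, q v := ⟨_, rfl⟩
  rw [← hs, ← ht, ← hσ] at hlt
  have hTd : ∑ v ∈ T, d v = ∑ v ∈ T, p v + σ := by
    rw [hσ, ← Finset.sum_add_distrib]; exact Finset.sum_congr rfl fun v _ => hpq v
  have hTp : ∑ v ∈ T, p v ≤ t * s := by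
    calc _ ≤ ∑ v ∈ T, s := Finset.sum_le_sum fun v _ => hs ▸ hps v
      _ = t * s := by simp [ht]
  have hTa : t * a ≤ ∑ v ∈ T, d v := by
    calc t * a = ∑ v ∈ T, a := by simp [ht]
      _ ≤ _ := Finset.sum_le_sum fun v _ => hda v
  have hbt : b < t := by
    by_contra h
    have : t * s ≤ b * s := Nat.mul_le_mul_right s (by omega)
    have := mul_comm a t
    omega
  have hstn : s + t + #(S ∪ T)ᶜ = n := by
    have h1 := Finset.card_add_card_compl (S ∪ T)
    rw [Finset.card_union_of_disjoint hST, Fintype.card_fin] at h1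
    omega
  have hnR : 2 * ((a : ℝ) + b + 2) * (b + 2) ≤ n := by exact_mod_cast hn
  have haR : (1 : ℝ) ≤ a := by exact_mod_cast ha
  have habR : (a : ℝ) + 1 ≤ b := by exact_mod_cast hab
  have hlG : (n : ℝ) - b - 2 < G.spectralRadius := lt_of_lt_of_le hHl hρ
  have hnb : 0 ≤ (n : ℝ) - b - 2 := by nlinarith
  by_cases htb : b + 2 ≤ t
  · exfalso
    have hst : s ≤ t := by
      by_contra h
      have h1 : b * t ≤ b * s := Nat.mul_le_mul_left b (by omega)
      have h2 : a * t ≤ b * t := Nat.mul_le_mul_right t (by omega)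
      omega
    have hh := hong G (fun v => le_trans ha (hda v))
    have hsum : ∑ v, d v = ∑ v ∈ S, d v + ∑ v ∈ T, d v + ∑ v ∈ (S ∪ T)ᶜ, d v := by
      rw [← Finset.sum_union hST, Finset.sum_add_sum_compl]
    have hS1 : ∑ v ∈ S, d v ≤ s * (n - 1) := by
      calc _ ≤ ∑ v ∈ S, (n - 1) := by
            apply Finset.sum_le_sum
            intro v _
            have : d v ≤ #((univ : Finset (Fin n)).erase v) := by
              apply Finset.card_le_card
              intro w
              simp only [mem_filter, mem_univ, true_and, mem_erase, and_true]
              exact fun h => h.ne'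
            rwa [Finset.card_erase_of_mem (mem_univ _), Finset.card_univ, Fintype.card_fin] at this
        _ = _ := by simp [hs]
    have hW1 : ∑ v ∈ (S ∪ T)ᶜ, d v ≤ #(S ∪ T)ᶜ * (n - t - 1) + σ := by
      calc _ ≤ ∑ v ∈ (S ∪ T)ᶜ, ((n - t - 1) + #{w ∈ T | G.Adj v w}) := by
            apply Finset.sum_le_sum
            intro v hv
            have hvT : v ∈ Tᶜ := by simp at hv ⊢; tauto
            have h1 : d v ≤ #(Tᶜ.erase v) + #{w ∈ T | G.Adj v w} := by
              refine le_trans (Finset.card_le_card ?_) (Finset.card_union_le _ _)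
              intro w
              simp only [mem_filter, mem_univ, true_and, mem_erase, mem_union, mem_compl]
              intro h
              have := h.ne'
              tauto
            rw [Finset.card_erase_of_mem hvT, Finset.card_compl, Fintype.card_fin, ← ht] at h1
            exact h1
        _ = #(S ∪ T)ᶜ * (n - t - 1) + ∑ v ∈ (S ∪ T)ᶜ, #{w ∈ T | G.Adj v w} := by
            rw [Finset.sum_add_distrib]; simp
        _ ≤ _ := by
            gcongr
            have h1 := Finset.sum_card_bipartiteAbove_eq_sum_card_bipartiteBelow
              (s := (S ∪ T)ᶜ) (t := T) (r := fun v w => G.Adj v w)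
            unfold bipartiteBelow bipartiteAbove at h1
            rw [h1, hσ]
            apply Finset.sum_le_sum
            intro v hv
            apply Finset.card_le_card
            intro w
            simp only [mem_filter, mem_univ, true_and, mem_union, mem_compl]
            intro h
            exact ⟨fun h' => h.1 (Or.inl h'), h.2.symm⟩
    have htot : ∑ v, d v ≤ s * (n - 1) + (t * s + σ) + (#(S ∪ T)ᶜ * (n - t - 1) + σ) := by
      omega
    have hWz : #(S ∪ T)ᶜ * (n - t - 1) = #(S ∪ T)ᶜ * (n - t - 1) := rfl
    have hcast : ((#(S ∪ T)ᶜ * (n - t - 1) : ℕ) : ℝ) = ((n : ℝ) - s - t) * (n - t - 1) := by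
      have h1 : ((#(S ∪ T)ᶜ : ℕ) : ℝ) = (n : ℝ) - s - t := by
        have : ((s + t + #(S ∪ T)ᶜ : ℕ) : ℝ) = n := by rw [hstn]
        push_cast at this
        linarith
      by_cases h0 : #(S ∪ T)ᶜ = 0
      · rw [← h1, h0]; simp
      · rw [Nat.cast_mul, h1, Nat.sub_sub, Nat.cast_sub (by omega)]
        push_cast; ring
    have htotR : (∑ v, (d v : ℝ)) ≤ (s : ℝ) * (n - 1) + (t * s + σ) +
        (((n : ℝ) - s - t) * (n - t - 1) + σ) := by
      have h1 : ((∑ v, d v : ℕ) : ℝ) ≤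
        ((s * (n - 1) + (t * s + σ) + (#(S ∪ T)ᶜ * (n - t - 1) + σ) : ℕ) : ℝ) := by
        exact_mod_cast htot
      rw [Nat.cast_add, Nat.cast_add, Nat.cast_add (#(S ∪ T)ᶜ * (n - t - 1)), hcast] at h1
      push_cast [show 1 ≤ n by omega] at h1
      exact h1
    have hfin := num_large a b n s t σ haR habR hnR (by exact_mod_cast htb) (by positivity)
      (by exact_mod_cast hst) (by exact_mod_cast (by omega : s + t ≤ n)) (by exact_mod_cast hlt)
    rw [Fintype.card_fin] at hh
    have hsq : ((n : ℝ) - b - 2) ^ 2 < G.spectralRadius ^ 2 := by gcongr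
    linarith
  · have htb : t = b + 1 := by omega
    subst htb
    have hsa : s ≤ a := by
      by_contra h
      have : b * (a + 1) ≤ b * s := Nat.mul_le_mul_left b (by omega)
      nlinarith
    by_cases hcon : ∃ v1 ∈ T, 2 * a - 1 ≤ d v1
    · obtain ⟨v1, hv1, hdv1⟩ := hcon
      have h1 := Finset.add_sum_erase T d hv1
      have hce : #(T.erase v1) = b := by rw [Finset.card_erase_of_mem hv1]; omega
      have h2 : b * a ≤ ∑ v ∈ T.erase v1, d v := by
        calc b * a = ∑ v ∈ T.erase v1, a := by simp [hce]
          _ ≤ _ := Finset.sum_le_sum fun v _ => hda v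
      have r1 : (b + 1) * s = b * s + s := by ring
      have r2 : a * (b + 1) = b * a + a := by ring
      have r3 : (b + 1) * a = b * a + a := by ring
      have hsa' : s = a := by omega
      subst hsa'
      have h3 : ∑ v ∈ T.erase v1, d v ≤ b * s := by omega
      have h4 : (b + 1) * s ≤ ∑ v ∈ T, p v := by omega
      have h5 : ∀ v ∈ T, p v = s := by
        have h6 : ∑ v ∈ T, p v = ∑ v ∈ T, s := by
          rw [Finset.sum_const, ← ht, smul_eq_mul]; omega
        exact (Finset.sum_eq_sum_iff_of_le fun v _ => hs ▸ hps v).1 h6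
      have h7 : ∀ v ∈ T.erase v1, s = d v := by
        have h6 : ∑ v ∈ T.erase v1, s = ∑ v ∈ T.erase v1, d v := by
          rw [Finset.sum_const, hce, smul_eq_mul]; omega
        exact (Finset.sum_eq_sum_iff_of_le fun v _ => hda v).1 h6
      have hN : ∀ v ∈ T, v ≠ v1 → ∀ w, G.Adj v w → w ∈ S := by
        intro v hv hne w hw
        have h8 := h7 v (mem_erase.2 ⟨hne, hv⟩)
        have h9 := h5 v hv
        have h10 := hpq v
        have hq0 : q v = 0 := by omega
        by_contra hwS
        have := Finset.card_eq_zero.1 hq0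
        have hmem : w ∈ (univ.filter fun w => w ∉ S ∧ G.Adj v w) := by simp [hwS, hw]
        rw [this] at hmem
        simp at hmem
      have hNv : q v1 = s - 1 := by
        have h9 := h5 v1 hv1
        have h10 := hpq v1
        omega
      obtain ⟨e, he⟩ := iso_case s b n ha hn2 G S T hST hs.symm ht.symm v1 hv1 hN hNv
      exact iso_of_le G _ e he hconn hρ
    · exfalso
      push Not at hcon
      obtain ⟨v0, hv0⟩ : T.Nonempty := Finset.card_pos.1 (by omega)
      have ha2 : 2 ≤ a := by
        have := hcon v0 hv0
        have := hda v0
        omega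
      have ha2R : (2 : ℝ) ≤ a := by exact_mod_cast ha2
      have hDn : ∑ v ∈ T, d v + 1 ≤ a * (b + 1) + a := by
        have r1 : (b + 1) * s = b * s + s := by ring
        omega
      have hDR : ∑ v ∈ T, (d v : ℝ) ≤ a * (b + 2) - 1 := by
        have : ((∑ v ∈ T, d v + 1 : ℕ) : ℝ) ≤ ((a * (b + 1) + a : ℕ) : ℝ) := by exact_mod_cast hDn
        push_cast at this
        linarith
      obtain ⟨hlbig, hlbig2⟩ := num_l a b n G.spectralRadius ha2R habR hnR hlG.le
      have hdR : ∀ v ∈ T, (d v : ℝ) ≤ 2 * a - 2 := by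
        intro v hv
        have h1 : d v + 2 ≤ 2 * a := by have := hcon v hv; omega
        have : ((d v + 2 : ℕ) : ℝ) ≤ ((2 * a : ℕ) : ℝ) := by exact_mod_cast h1
        push_cast at this
        linarith
      have hup := upper G T (by linarith)
        (fun v hv => lt_of_le_of_lt (hdR v hv) (by linarith)) (lt_of_le_of_lt hDR hlbig2)
      have hTc : (#Tᶜ : ℝ) = n - b - 1 := by
        rw [Finset.card_compl, Fintype.card_fin, ← ht, Nat.cast_sub (by omega)]
        push_cast; ring
      rw [hTc] at hup
      have hQ : ∑ v ∈ T, (d v : ℝ) ^ 2 ≤ (b + 1) * a ^ 2 + (3 * a - 2) * (a - 1) := by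
        calc ∑ v ∈ T, (d v : ℝ) ^ 2 ≤ ∑ v ∈ T, ((a : ℝ) ^ 2 + (3 * a - 2) * (d v - a)) := by
              apply Finset.sum_le_sum
              intro v hv
              have h1 := hdR v hv
              have h2 : (a : ℝ) ≤ d v := by exact_mod_cast hda v
              nlinarith
          _ = (b + 1) * a ^ 2 + (3 * a - 2) * (∑ v ∈ T, (d v : ℝ) - (b + 1) * a) := by
              rw [Finset.sum_add_distrib, ← Finset.mul_sum, Finset.sum_sub_distrib]
              simp only [Finset.sum_const, ← ht, nsmul_eq_mul]
              push_cast; ring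
          _ ≤ _ := by
              have : ∑ v ∈ T, (d v : ℝ) - (b + 1) * a ≤ a - 1 := by linarith
              have := mul_le_mul_of_nonneg_left this (show (0 : ℝ) ≤ 3 * a - 2 by linarith)
              linarith
      have hlH0 : 0 ≤ (Hgraph n a b).spectralRadius := by linarith
      refine num_small a b n G.spectralRadius (G.spectralRadius + 1 - (n - b - 1))
        (∑ v ∈ T, (d v : ℝ)) (∑ v ∈ T, (d v : ℝ) ^ 2) ha2R habR hnR hlG.le
        (Finset.sum_nonneg fun v _ => Nat.cast_nonneg _) hDR hQ hup ?_
      refine hHQ.trans ?_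
      have hz : 0 ≤ (Hgraph n a b).spectralRadius + 1 - ((n : ℝ) - b - 1) := by linarith
      have hG0 : 0 ≤ G.spectralRadius := by linarith
      gcongr
end

section
/- Let a and b be positive integers with b > a and let n ≥ 2(a+b+2)(b+2). If G belongs to 𝒢_n^{a,b}, then n - b - 2 < ρ(G) < n - b - 1. -/
set_option linter.unusedSectionVars false

open Finset Matrix

namespace SimpleGraph

lemma specRad_lt {V : Type*} [Fintype V] [DecidableEq V] [Nonempty V] (G : SimpleGraph V)
    [DecidableRel G.Adj] (x : V → ℝ) (c : ℝ) (hx : ∀ i, 0 < x i)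
    (h : ∀ i, ∑ j, (if G.Adj i j then x j else 0) < c * x i) : G.spectralRadius < c := by
  have hd : (Classical.decRel G.Adj) = ‹DecidableRel G.Adj› := Subsingleton.elim _ _
  subst hd
  let _ := Classical.decRel G.Adj
  unfold spectralRadius
  set hA := isHermitian_adjMatrix' G
  obtain ⟨k, hk⟩ := exists_eq_ciSup_of_finite (f := hA.eigenvalues)
  rw [← hk]
  have hev := hA.mulVec_eigenvectorBasis k
  have hne : (hA.eigenvectorBasis k : EuclideanSpace ℝ V).ofLp ≠ 0 :=
    (WithLp.ofLp_eq_zero 2).ne.2 <| hA.eigenvectorBasis.orthonormal.ne_zero k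
  generalize (hA.eigenvectorBasis k : EuclideanSpace ℝ V).ofLp = y at hev hne
  generalize hA.eigenvalues k = μ at hev
  obtain ⟨i, hi⟩ := Finite.exists_max (fun i => |y i| / x i)
  have hyi : 0 < |y i| := by
    obtain ⟨j, hj⟩ := Function.ne_iff.1 hne
    have h1 : 0 < |y j| / x j := div_pos (abs_pos.2 hj) (hx j)
    have h2 := lt_of_lt_of_le h1 (hi j)
    by_contra h3
    have : |y i| = 0 := le_antisymm (not_lt.1 h3) (abs_nonneg _)
    simp [this] at h2
  set t := |y i| / x i with ht
  have htp : 0 < t := div_pos hyi (hx i)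
  have hb : ∀ j, |y j| ≤ t * x j := fun j => (div_le_iff₀ (hx j)).1 (hi j)
  have hyt : |y i| = t * x i := by rw [ht, div_mul_cancel₀ _ (hx i).ne']
  have h1 : μ * y i = ∑ j, (if G.Adj i j then y j else 0) := by
    have := congrFun hev i
    simp only [Matrix.mulVec, dotProduct, adjMatrix_apply, Pi.smul_apply, smul_eq_mul,
      ite_mul, one_mul, zero_mul] at this
    exact this.symm
  have h2 : |μ * y i| ≤ t * ∑ j, (if G.Adj i j then x j else 0) := by
    rw [h1, Finset.mul_sum]
    refine (Finset.abs_sum_le_sum_abs _ _).trans (Finset.sum_le_sum fun j _ => ?_)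
    split_ifs
    · exact hb j
    · simp
  have h3 : |μ| * |y i| < c * |y i| := by
    rw [← abs_mul]
    refine h2.trans_lt ?_
    rw [hyt]
    nlinarith [mul_lt_mul_of_pos_left (h i) htp]
  exact (le_abs_self μ).trans_lt (lt_of_mul_lt_mul_right h3 hyi.le)

lemma lt_specRad {V : Type*} [Fintype V] [DecidableEq V] (G : SimpleGraph V)
    [DecidableRel G.Adj] (x : V → ℝ) (c : ℝ)
    (h : c * ∑ i, x i * x i < ∑ i, x i * ∑ j, (if G.Adj i j then x j else 0)) :
    c < G.spectralRadius := by
  have hd : (Classical.decRel G.Adj) = ‹DecidableRel G.Adj› := Subsingleton.elim _ _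
  subst hd
  let _ := Classical.decRel G.Adj
  unfold spectralRadius
  set hA := isHermitian_adjMatrix' G
  by_contra hc
  have hle : ∀ i, hA.eigenvalues i ≤ c := fun i =>
    (le_ciSup (Set.finite_range _).bddAbove i).trans (not_lt.1 hc)
  have hB : (c • (1 : Matrix V V ℝ) - G.adjMatrix ℝ).PosSemidef := by
    have e : c • (1 : Matrix V V ℝ) - G.adjMatrix ℝ =
      Unitary.conjStarAlgAut ℝ _ hA.eigenvectorUnitary
        (diagonal (fun i => c - hA.eigenvalues i)) := by
      conv_lhs => rw [hA.spectral_theorem]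
      have : diagonal (fun i => c - hA.eigenvalues i) =
        c • (1 : Matrix V V ℝ) - diagonal (RCLike.ofReal ∘ hA.eigenvalues) := by
        ext i j
        by_cases hij : i = j <;> simp [hij, Matrix.one_apply, Matrix.diagonal_apply]
      rw [this, map_sub, map_smul, map_one]
    rw [e, Unitary.conjStarAlgAut_apply]
    have hu : IsUnit (hA.eigenvectorUnitary : Matrix V V ℝ) := Unitary.isUnit_coe
    rw [Matrix.IsUnit.posSemidef_star_right_conjugate_iff hu, posSemidef_diagonal_iff]
    intro i
    linarith [hle i]
  have h4 := hB.dotProduct_mulVec_nonneg x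
  rw [Matrix.sub_mulVec, Matrix.smul_mulVec, Matrix.one_mulVec, dotProduct_sub] at h4
  simp only [dotProduct, Matrix.mulVec, adjMatrix_apply, Pi.smul_apply, smul_eq_mul,
      ite_mul, one_mul, zero_mul, star_trivial] at h4
  have : ∑ i, x i * (c * x i) = c * ∑ i, x i * x i := by
    rw [Finset.mul_sum]; exact Finset.sum_congr rfl fun i _ => by ring
  linarith

end SimpleGraph

lemma card_fin_lt_s1 (n m : ℕ) (h : m ≤ n) :
    ∑ j : Fin n, (if (j : ℕ) < m then (1 : ℝ) else 0) = m := by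
  rw [Finset.sum_boole, Fin.card_filter_val_lt, min_eq_right h]

/-- **Lemma (bounds on the spectral radius of members of `𝒢_n^{a,b}`).** -/
theorem GFamily_spectralRadius_bounds (a b n : ℕ) (ha : 0 < a) (hab : a < b)
    (hn : 2 * (a + b + 2) * (b + 2) ≤ n)
    (G : SimpleGraph (Fin n)) (hG : GFamily n a b G) :
    (n : ℝ) - b - 2 < G.spectralRadius ∧ G.spectralRadius < (n : ℝ) - b - 1 := by
  classical
  obtain ⟨F, hFc, hF, rfl⟩ := hG
  obtain ⟨m, hm⟩ : ∃ m, n = m + b + 1 := by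
    have : b + 1 ≤ n := by nlinarith
    exact ⟨n - b - 1, by omega⟩
  have hm' : n - b - 1 = m := by omega
  rw [hm'] at hF
  have hmb : 2 * a * (b + 2) ≤ m := by nlinarith
  have hmn : m < n := by omega
  have hmpos : 0 < m := by nlinarith
  have hnm : (n : ℝ) = m + b + 1 := by exact_mod_cast hm
  set G := baseGraph n a b ⊔
    SimpleGraph.fromEdgeSet ((fun p : Fin n × Fin n => s(p.1, p.2)) '' (F : Set (Fin n × Fin n))) with hGdef
  have hcl : ∀ i j : Fin n, i ≠ j → (i : ℕ) < m → (j : ℕ) < m → G.Adj i j := by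
    intro i j hij hi hj
    left
    simp only [baseGraph, SimpleGraph.fromRel_adj, hm']
    tauto
  have hja : ∀ i j : Fin n, i ≠ j → (i : ℕ) < a → G.Adj i j := by
    intro i j hij hi
    left
    simp only [baseGraph, SimpleGraph.fromRel_adj, hm']
    tauto
  have ham : a ≤ m := by nlinarith
  have hind : ∀ i j : Fin n, m ≤ (i : ℕ) → G.Adj i j → (j : ℕ) < m ∧ ((j : ℕ) < a ∨ (j, i) ∈ F) := by
    intro i j hi hadj
    rcases hadj with hadj | hadj
    · simp only [baseGraph, SimpleGraph.fromRel_adj, hm'] at hadj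
      omega
    · rw [SimpleGraph.fromEdgeSet_adj] at hadj
      obtain ⟨⟨p, hp, hpe⟩, -⟩ := hadj
      have hp' := hF p hp
      simp only [Sym2.eq_iff] at hpe
      rcases hpe with ⟨h1, h2⟩ | ⟨h1, h2⟩
      · rw [h1] at hp'; omega
      · have : p = (j, i) := Prod.ext h1 h2
        subst this
        exact ⟨hp'.2.1, Or.inr hp⟩
  have hsum := card_fin_lt_s1 n m hmn.le
  have hmR : (0 : ℝ) < m := by exact_mod_cast hmpos
  have haux : 2 * (a : ℝ) * (b + 2) ≤ m := by exact_mod_cast hmb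
  have haR : (1 : ℝ) ≤ a := by exact_mod_cast ha
  have hbR : (0 : ℝ) < (b : ℝ) + 2 := by positivity
  constructor
  · let z : Fin n := ⟨0, by omega⟩
    let w : Fin n := ⟨m, hmn⟩
    have hzw : z ≠ w := by
      intro h
      have : (0 : ℕ) = m := congrArg Fin.val h
      omega
    set ε : ℝ := 1 / m with hε
    have hεp : 0 < ε := by positivity
    have hεm : ε * m = 1 := by rw [hε]; field_simp
    let x : Fin n → ℝ := fun j => (if (j : ℕ) < m then 1 else 0) + (if j = w then ε else 0)
    have hx0 : ∀ j, 0 ≤ x j := fun j => by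
      simp only [x]; split_ifs <;> linarith
    apply G.lt_specRad x
    have hwm : ¬ ((w : ℕ) < m) := lt_irrefl m
    have hxx : ∑ i, x i * x i = m + ε ^ 2 := by
      have : ∀ i, x i * x i = (if (i : ℕ) < m then 1 else 0) + (if i = w then ε ^ 2 else 0) := by
        intro i
        by_cases h : i = w
        · subst h
          simp [x, hwm, sq]
        · simp [x, h]
      rw [Finset.sum_congr rfl fun i _ => this i, Finset.sum_add_distrib, hsum]
      simp
    have hxs : ∑ i, x i = m + ε := by
      simp only [x]
      rw [Finset.sum_add_distrib, hsum]
      simp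
    have hrow : ∀ i : Fin n, (if (i : ℕ) < m then (m : ℝ) - 1 else 0) + (if i = z then ε else 0)
        + (if i = w then 1 else 0) ≤ ∑ j, (if G.Adj i j then x j else 0) := by
      intro i
      have hterm : ∀ j : Fin n, (if (i : ℕ) < m then ((if (j : ℕ) < m then (1 : ℝ) else 0) - (if j = i then 1 else 0)) else 0)
          + (if i = z then (if j = w then ε else 0) else 0)
          + (if i = w then (if j = z then 1 else 0) else 0) ≤ (if G.Adj i j then x j else 0) := by
        intro j
        by_cases hiw : i = w
        · subst hiw
          by_cases hj : j = z
          · have : G.Adj w j := by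
              rw [hj]; exact (hja z w hzw ha).symm
            have hjm : (j : ℕ) < m := by rw [hj]; exact hmpos
            have hjw : j ≠ w := by rw [hj]; exact hzw
            rw [if_pos this]
            simp [hwm, hzw.symm, x, hj, hmpos, hzw, z]
          · simp [hwm, hzw.symm, hj]
            split_ifs
            · exact hx0 j
            · exact le_rfl
        · by_cases him : (i : ℕ) < m
          · by_cases hji : j = i
            · subst hji
              simp [him, hiw]
            · by_cases hjm : (j : ℕ) < m
              · have hjw : j ≠ w := by rintro rfl; exact hwm hjm
                simp [him, hiw, hji, hjm, hjw, hcl i j (Ne.symm hji) him hjm, x]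
              · by_cases hiz : i = z
                · have := hja z j (by rw [← hiz]; exact Ne.symm hji) ha
                  rw [← hiz] at this
                  simp [him, hiw, hji, hjm, this, x]
                  split_ifs <;> simp
                · simp [him, hiw, hji, hjm, hiz]
                  split_ifs
                  · exact hx0 j
                  · exact le_rfl
          · have hiz : i ≠ z := by rintro rfl; exact him hmpos
            simp only [him, hiw, hiz, if_false, add_zero]
            split_ifs
            · exact hx0 j
            · exact le_rfl
      refine le_trans (le_of_eq ?_) (Finset.sum_le_sum fun j _ => hterm j)
      rw [Finset.sum_add_distrib, Finset.sum_add_distrib]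
      congr 1
      · congr 1
        · split_ifs
          · rw [Finset.sum_sub_distrib, hsum]; simp
          · simp
        · split_ifs <;> simp
      · split_ifs <;> simp
    have hlow : (m : ℝ) * (m - 1) + ε + ε ≤ ∑ i, x i * ∑ j, (if G.Adj i j then x j else 0) := by
      refine le_trans (le_of_eq ?_)
        (Finset.sum_le_sum fun i _ => mul_le_mul_of_nonneg_left (hrow i) (hx0 i))
      have : ∀ i : Fin n, x i * ((if (i : ℕ) < m then (m : ℝ) - 1 else 0) + (if i = z then ε else 0)
        + (if i = w then 1 else 0)) = (m - 1) * (if (i : ℕ) < m then (1 : ℝ) else 0) +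
          (if i = z then ε else 0) + (if i = w then ε else 0) := by
        intro i
        by_cases hiw : i = w
        · subst hiw
          simp [x, hwm, hzw.symm]
        · by_cases him : (i : ℕ) < m
          · simp [x, hiw, him]
          · have hiz : i ≠ z := by rintro rfl; exact him hmpos
            simp [hiw, him, hiz]
      rw [Finset.sum_congr rfl fun i _ => this i, Finset.sum_add_distrib, Finset.sum_add_distrib,
        ← Finset.mul_sum, hsum]
      simp
      ring
    refine lt_of_lt_of_le ?_ hlow
    rw [hxx, hnm]
    have h5 : ε ^ 2 * m = ε := by rw [sq, mul_assoc, hεm, mul_one]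
    nlinarith [sq_nonneg ε]
  · set d : ℝ := 1 / (b + 2) with hd
    have hdp : 0 < d := by positivity
    have hdb : d * (b + 2) = 1 := by rw [hd]; field_simp
    have hd1 : d ≤ 1 := by nlinarith [(Nat.cast_nonneg b : (0 : ℝ) ≤ b)]
    have : Nonempty (Fin n) := ⟨⟨m, hmn⟩⟩
    let x : Fin n → ℝ := fun j => if (j : ℕ) < m then 1 else d
    have hxp : ∀ j, 0 < x j := fun j => by
      simp only [x]; split_ifs <;> linarith
    refine G.specRad_lt x _ hxp ?_
    intro i
    have hnm2 : (n : ℝ) - b - 1 = m := by rw [hnm]; ring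
    rw [hnm2]
    by_cases him : (i : ℕ) < m
    · have hle : ∀ j, (if G.Adj i j then x j else 0) ≤
          ((1 - d) * (if (j : ℕ) < m then (1 : ℝ) else 0) + d) - (if j = i then 1 else 0) := by
        intro j
        by_cases hji : j = i
        · subst hji
          simp [him]
        · by_cases hjm : (j : ℕ) < m
          · simp [hji, hjm, x]; split_ifs <;> norm_num
          · simp [hji, hjm, x]; split_ifs <;> linarith
      refine (Finset.sum_le_sum fun j _ => hle j).trans_lt ?_
      rw [Finset.sum_sub_distrib, Finset.sum_add_distrib, ← Finset.mul_sum, hsum]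
      simp [x, him]
      rw [hnm]
      nlinarith
    · have hle : ∀ j, (if G.Adj i j then x j else 0) ≤
          (if (j : ℕ) < a then (1 : ℝ) else 0) + (if (j, i) ∈ F then 1 else 0) := by
        intro j
        by_cases hadj : G.Adj i j
        · obtain ⟨h1, h2⟩ := hind i j (not_lt.1 him) hadj
          simp only [hadj, if_true, x, h1]
          rcases h2 with h2 | h2
          · simp only [h2, if_true]; split_ifs <;> norm_num
          · simp only [h2, if_true]; split_ifs <;> norm_num
        · simp only [hadj, if_false]; split_ifs <;> norm_num
      refine (Finset.sum_le_sum fun j _ => hle j).trans_lt ?_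
      rw [Finset.sum_add_distrib, card_fin_lt_s1 n a (by omega), Finset.sum_boole]
      have hcard : #{j : Fin n | (j, i) ∈ F} ≤ a - 1 := by
        rw [← hFc]
        refine Finset.card_le_card_of_injOn (fun j => (j, i)) ?_ ?_
        · intro j hj
          simpa using hj
        · intro j _ k _ hjk
          exact (Prod.ext_iff.1 hjk).1
      have hcard' : (#{j : Fin n | (j, i) ∈ F} : ℝ) + 1 ≤ a := by
        have : #{j : Fin n | (j, i) ∈ F} + 1 ≤ a := by omega
        exact_mod_cast this
      simp only [x, him, if_false]
      have : 2 * (a : ℝ) ≤ m * d := by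
        rw [hd, mul_one_div, le_div_iff₀ hbR]; exact haux
      linarith
end

section
/- Let a and b be positive integers with b > a and let n ≥ 2(a+b+2)(b+2). If G belongs to 𝒢_n^{a,b}, then ρ(G) ≤ ρ(H_n^{a,b}), with equality if and only if G is isomorphic to H_n^{a,b}. -/
set_option linter.unusedSectionVars false

open Finset Matrix

namespace GFaux
open SimpleGraph

variable {V : Type*} [Fintype V] [DecidableEq V]

lemma psd (G : SimpleGraph V) [DecidableRel G.Adj] :
    (G.spectralRadius • (1 : Matrix V V ℝ) - G.adjMatrix ℝ).PosSemidef := by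
  rename_i inst
  obtain rfl : inst = Classical.decRel G.Adj := Subsingleton.elim _ _
  letI := Classical.decRel G.Adj
  have hA := isHermitian_adjMatrix' G
  have hB : (G.spectralRadius • (1 : Matrix V V ℝ) - G.adjMatrix ℝ).IsHermitian := by
    apply Matrix.IsHermitian.sub _ hA
    rw [Matrix.IsHermitian, Matrix.conjTranspose_smul]; simp
  rw [hB.posSemidef_iff_eigenvalues_nonneg]
  intro i
  set μ := hB.eigenvalues i with hμ
  have h1 : μ ∈ spectrum ℝ (G.spectralRadius • (1 : Matrix V V ℝ) - G.adjMatrix ℝ) := by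
    rw [hB.spectrum_real_eq_range_eigenvalues]; exact ⟨i, rfl⟩
  have h2 : G.spectralRadius - μ ∈ spectrum ℝ (G.adjMatrix ℝ) := by
    rw [spectrum.mem_iff] at h1 ⊢
    convert h1 using 1
    have := IsUnit.neg_iff (algebraMap ℝ (Matrix V V ℝ) (G.spectralRadius - μ) - G.adjMatrix ℝ)
    rw [← this]
    congr! 1
    simp only [Algebra.algebraMap_eq_smul_one, sub_smul]
    abel
  rw [hA.spectrum_real_eq_range_eigenvalues] at h2
  obtain ⟨j, hj⟩ := h2
  have : hA.eigenvalues j ≤ G.spectralRadius :=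
    le_ciSup (f := hA.eigenvalues) (Set.finite_range _).bddAbove j
  simp only [Pi.zero_apply]
  linarith

lemma rayleigh (G : SimpleGraph V) [DecidableRel G.Adj] (x : V → ℝ) :
    x ⬝ᵥ (G.adjMatrix ℝ *ᵥ x) ≤ G.spectralRadius * (x ⬝ᵥ x) := by
  have := (psd G).dotProduct_mulVec_nonneg x
  simp only [Matrix.sub_mulVec, Matrix.smul_mulVec, Matrix.one_mulVec, dotProduct_sub,
    dotProduct_smul, star_trivial, smul_eq_mul] at this
  linarith

lemma exists_eig [Nonempty V] (G : SimpleGraph V) [DecidableRel G.Adj] :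
    ∃ x : V → ℝ, x ≠ 0 ∧ G.adjMatrix ℝ *ᵥ x = G.spectralRadius • x := by
  rename_i inst
  obtain rfl : inst = Classical.decRel G.Adj := Subsingleton.elim _ _
  letI := Classical.decRel G.Adj
  have hA := isHermitian_adjMatrix' G
  obtain ⟨i, hi⟩ := exists_eq_ciSup_of_finite (f := hA.eigenvalues)
  refine ⟨hA.eigenvectorBasis i, ?_, ?_⟩
  · intro h
    apply hA.eigenvectorBasis.toBasis.ne_zero i
    ext j
    simpa using congrFun h j
  · have := hA.mulVec_eigenvectorBasis i
    rw [this, hi]; rfl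

lemma exists_perron [Nonempty V] (G : SimpleGraph V) [DecidableRel G.Adj] :
    ∃ x : V → ℝ, x ≠ 0 ∧ (∀ i, 0 ≤ x i) ∧ G.adjMatrix ℝ *ᵥ x = G.spectralRadius • x := by
  obtain ⟨x, hx0, hx⟩ := exists_eig G
  refine ⟨fun i => |x i|, ?_, fun i => abs_nonneg _, ?_⟩
  · intro h; apply hx0; ext i; simpa using congrFun h i
  · set z : V → ℝ := fun i => |x i| with hz
    have h1 : x ⬝ᵥ (G.adjMatrix ℝ *ᵥ x) = G.spectralRadius * (x ⬝ᵥ x) := by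
      rw [hx, dotProduct_smul]; rfl
    have h2 : x ⬝ᵥ x = z ⬝ᵥ z := by simp [dotProduct, hz]
    have h3 : x ⬝ᵥ (G.adjMatrix ℝ *ᵥ x) ≤ z ⬝ᵥ (G.adjMatrix ℝ *ᵥ z) := by
      simp only [dotProduct, Matrix.mulVec, Finset.mul_sum]
      refine Finset.sum_le_sum fun i _ => Finset.sum_le_sum fun j _ => ?_
      simp only [hz, adjMatrix_apply]
      split_ifs
      · simp only [one_mul]; rw [← abs_mul]; exact le_abs_self _
      · simp
    have h4 := (psd G).dotProduct_mulVec_zero_iff z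
    have h5 := rayleigh G z
    simp only [Matrix.sub_mulVec, Matrix.smul_mulVec, Matrix.one_mulVec, dotProduct_sub,
      dotProduct_smul, star_trivial, smul_eq_mul] at h4
    have := h4.1 (by rw [h1, h2] at h3; linarith)
    exact (sub_eq_zero.1 this).symm

lemma iso_le {W : Type*} [Fintype W] [DecidableEq W] [Nonempty V] (G : SimpleGraph V)
    (H : SimpleGraph W) (e : G ≃g H) : G.spectralRadius ≤ H.spectralRadius := by
  classical
  obtain ⟨x, hx0, hx⟩ := exists_eig G
  have h1 := rayleigh H (x ∘ e.symm)
  have h2 : (x ∘ e.symm) ⬝ᵥ (x ∘ e.symm) = x ⬝ᵥ x := by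
    simp only [dotProduct]
    exact Fintype.sum_equiv e.symm.toEquiv _ _ (fun _ => rfl)
  have h3 : (x ∘ e.symm) ⬝ᵥ (H.adjMatrix ℝ *ᵥ (x ∘ e.symm)) = x ⬝ᵥ (G.adjMatrix ℝ *ᵥ x) := by
    simp only [dotProduct, Matrix.mulVec]
    refine Fintype.sum_equiv e.symm.toEquiv _ _ (fun i => ?_)
    congr 1
    refine Fintype.sum_equiv e.symm.toEquiv _ _ (fun j => ?_)
    simp [adjMatrix_apply, e.symm.map_adj_iff]
  rw [h2, h3, hx, dotProduct_smul, smul_eq_mul] at h1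
  have : 0 < x ⬝ᵥ x := lt_of_le_of_ne (by simpa using dotProduct_star_self_nonneg x)
    (fun h => hx0 (dotProduct_self_eq_zero.1 h.symm))
  exact le_of_mul_le_mul_right h1 this

/-- clique on `T`, independent off `T`. -/
structure IsSplit (G : SimpleGraph V) (T : Finset V) : Prop where
  cl : ∀ i ∈ T, ∀ j ∈ T, i ≠ j → G.Adj i j
  ind : ∀ i ∉ T, ∀ j ∉ T, ¬ G.Adj i j

variable {G H : SimpleGraph V} [DecidableRel G.Adj] [DecidableRel H.Adj] {T : Finset V}

lemma mulVec_out (hG : IsSplit G T) (x : V → ℝ) {w : V} (hw : w ∉ T) :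
    (G.adjMatrix ℝ *ᵥ x) w = ∑ i ∈ T, if G.Adj w i then x i else 0 := by
  simp only [Matrix.mulVec, dotProduct, adjMatrix_apply, ite_mul, one_mul, zero_mul]
  rw [← Finset.sum_subset (Finset.subset_univ T)]
  intro i _ hi
  rw [if_neg (hG.ind w hw i hi)]

lemma mulVec_in (hG : IsSplit G T) (x : V → ℝ) {i : V} (hi : i ∈ T) :
    (G.adjMatrix ℝ *ᵥ x) i = ∑ j ∈ T, x j - x i + ∑ w ∈ Tᶜ, if G.Adj i w then x w else 0 := by
  simp only [Matrix.mulVec, dotProduct, adjMatrix_apply, ite_mul, one_mul, zero_mul]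
  rw [← Finset.sum_add_sum_compl T]
  congr 1
  rw [← Finset.sum_erase_add _ _ hi, ← Finset.sum_erase_add (a := i) _ _ hi]
  simp only [SimpleGraph.irrefl, if_false, add_zero, add_sub_cancel_right]
  refine Finset.sum_congr rfl fun j hj => ?_
  rw [if_pos (hG.cl i hi j (Finset.mem_of_mem_erase hj) (Finset.ne_of_mem_erase hj).symm)]

lemma quad (hG : IsSplit G T) (x : V → ℝ) :
    x ⬝ᵥ (G.adjMatrix ℝ *ᵥ x) = (∑ i ∈ T, x i)^2 - ∑ i ∈ T, x i ^ 2 +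
      2 * ∑ w ∈ Tᶜ, x w * ∑ i ∈ T, if G.Adj w i then x i else 0 := by
  rw [dotProduct, ← Finset.sum_add_sum_compl T]
  have h1 : ∑ i ∈ T, x i * (G.adjMatrix ℝ *ᵥ x) i = (∑ i ∈ T, x i)^2 - ∑ i ∈ T, x i ^ 2 +
      ∑ w ∈ Tᶜ, x w * ∑ i ∈ T, if G.Adj w i then x i else 0 := by
    rw [Finset.sum_congr rfl fun i hi => by rw [mulVec_in hG x hi]]
    simp only [mul_add, mul_sub, Finset.sum_add_distrib, Finset.sum_sub_distrib, sq,
      ← Finset.sum_mul]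
    congr 1
    simp only [Finset.mul_sum]
    rw [Finset.sum_comm]
    refine Finset.sum_congr rfl fun i _ => Finset.sum_congr rfl fun j _ => ?_
    simp only [G.adj_comm i j]
    split_ifs <;> ring
  have h2 : ∑ w ∈ Tᶜ, x w * (G.adjMatrix ℝ *ᵥ x) w =
      ∑ w ∈ Tᶜ, x w * ∑ i ∈ T, if G.Adj w i then x i else 0 :=
    Finset.sum_congr rfl fun w hw => by rw [mulVec_out hG x (Finset.mem_compl.1 hw)]
  rw [h1, h2]; ring

lemma compare (hG : IsSplit G T) (hH : IsSplit H T) (x : V → ℝ)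
    (hx : G.adjMatrix ℝ *ᵥ x = G.spectralRadius • x) (hρ : 0 < G.spectralRadius)
    (hlt : ∑ w ∈ Tᶜ, (∑ i ∈ T, if G.Adj w i then x i else 0)^2 <
      ∑ w ∈ Tᶜ, (∑ i ∈ T, if H.Adj w i then x i else 0)^2) :
    G.spectralRadius < H.spectralRadius := by
  by_contra! hle
  set ρ := G.spectralRadius with hρd
  set p : V → ℝ := fun w => ∑ i ∈ T, if G.Adj w i then x i else 0 with hp
  set q : V → ℝ := fun w => ∑ i ∈ T, if H.Adj w i then x i else 0 with hq
  change ∑ w ∈ Tᶜ, p w ^ 2 < ∑ w ∈ Tᶜ, q w ^ 2 at hlt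
  have hpx : ∀ w ∈ Tᶜ, p w = ρ * x w := by
    intro w hw
    rw [hp]; dsimp only
    rw [← mulVec_out hG x (Finset.mem_compl.1 hw), hx]; rfl
  have e1 := quad hG x
  rw [hx, dotProduct_smul, smul_eq_mul, dotProduct, ← Finset.sum_add_sum_compl T] at e1
  change _ = _ + 2 * ∑ w ∈ Tᶜ, x w * p w at e1
  have e2 : ∑ w ∈ Tᶜ, x w * p w = ρ⁻¹ * ∑ w ∈ Tᶜ, p w ^ 2 := by
    rw [Finset.mul_sum]
    refine Finset.sum_congr rfl fun w hw => ?_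
    rw [hpx w hw]; field_simp
  have e3 : ρ * ∑ w ∈ Tᶜ, x w * x w = ρ⁻¹ * ∑ w ∈ Tᶜ, p w ^ 2 := by
    rw [Finset.mul_sum, Finset.mul_sum]
    refine Finset.sum_congr rfl fun w hw => ?_
    rw [hpx w hw]; field_simp
  set z : V → ℝ := fun v => if v ∈ T then x v else ρ⁻¹ * q v with hz
  have hzT : ∀ i ∈ T, z i = x i := fun i hi => by simp [hz, hi]
  have hzW : ∀ i ∈ Tᶜ, z i = ρ⁻¹ * q i := fun i hi => by simp [hz, Finset.mem_compl.1 hi]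
  have f1 := quad hH z
  have f2 := rayleigh H z
  have f3 : z ⬝ᵥ z = ∑ i ∈ T, x i * x i + ρ⁻¹ * (ρ⁻¹ * ∑ w ∈ Tᶜ, q w ^ 2) := by
    rw [dotProduct, ← Finset.sum_add_sum_compl T]
    congr 1
    · exact Finset.sum_congr rfl fun i hi => by rw [hzT i hi]
    · rw [Finset.mul_sum, Finset.mul_sum]
      exact Finset.sum_congr rfl fun i hi => by rw [hzW i hi]; ring
  have f4 : ∑ w ∈ Tᶜ, z w * (∑ i ∈ T, if H.Adj w i then z i else 0) =
      ρ⁻¹ * ∑ w ∈ Tᶜ, q w ^ 2 := by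
    rw [Finset.mul_sum]
    refine Finset.sum_congr rfl fun w hw => ?_
    have : (∑ i ∈ T, if H.Adj w i then z i else 0) = q w :=
      Finset.sum_congr rfl fun i hi => by rw [hzT i hi]
    rw [this, hzW w hw]; ring
  have f5 : ∑ i ∈ T, z i = ∑ i ∈ T, x i := Finset.sum_congr rfl hzT
  have f6 : ∑ i ∈ T, z i ^ 2 = ∑ i ∈ T, x i ^ 2 :=
    Finset.sum_congr rfl fun i hi => by rw [hzT i hi]
  rw [f4, f5, f6] at f1
  have f7 : H.spectralRadius * (z ⬝ᵥ z) ≤ ρ * (z ⬝ᵥ z) :=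
    mul_le_mul_of_nonneg_right hle (by simpa using dotProduct_star_self_nonneg z)
  rw [f3] at f7
  have f8 : ρ * (∑ i ∈ T, x i * x i + ρ⁻¹ * (ρ⁻¹ * ∑ w ∈ Tᶜ, q w ^ 2)) =
      ρ * ∑ i ∈ T, x i * x i + ρ⁻¹ * ∑ w ∈ Tᶜ, q w ^ 2 := by field_simp
  rw [f3] at f2
  have : ρ⁻¹ * ∑ w ∈ Tᶜ, p w ^ 2 < ρ⁻¹ * ∑ w ∈ Tᶜ, q w ^ 2 :=
    mul_lt_mul_of_pos_left hlt (inv_pos.2 hρ)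
  rw [e2] at e1
  rw [mul_add, e3] at e1
  linarith

lemma rho_ge (hG : IsSplit G T) (hT : T.Nonempty) : (T.card : ℝ) - 1 ≤ G.spectralRadius := by
  have h := rayleigh G (fun i => if i ∈ T then (1:ℝ) else 0)
  rw [quad hG] at h
  have e1 : ∑ i ∈ T, (if i ∈ T then (1:ℝ) else 0) = T.card := by simp
  have e2 : ∑ i ∈ T, (if i ∈ T then (1:ℝ) else 0)^2 = T.card := by simp
  have e3 : ∑ w ∈ Tᶜ, (if w ∈ T then (1:ℝ) else 0) *
      (∑ i ∈ T, if G.Adj w i then (if i ∈ T then (1:ℝ) else 0) else 0) = 0 :=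
    Finset.sum_eq_zero fun w hw => by rw [if_neg (Finset.mem_compl.1 hw), zero_mul]
  have e4 : (fun i => if i ∈ T then (1:ℝ) else 0) ⬝ᵥ (fun i => if i ∈ T then (1:ℝ) else 0)
      = T.card := by simp [dotProduct]
  rw [e1, e2, e3, e4] at h
  have : (0:ℝ) < T.card := by exact_mod_cast hT.card_pos
  nlinarith

lemma bounds (hG : IsSplit G T) (x : V → ℝ) (hx0 : x ≠ 0) (hnn : ∀ i, 0 ≤ x i)
    (hx : G.adjMatrix ℝ *ᵥ x = G.spectralRadius • x) (hρ : 0 < G.spectralRadius) :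
    ∃ m M Y : ℝ, 0 < m ∧ m ≤ M ∧ (∀ i ∈ T, m ≤ x i ∧ x i ≤ M) ∧
      (G.spectralRadius + 1) * (M - m) = Y ∧
      G.spectralRadius * Y = ∑ w ∈ Tᶜ, ∑ i ∈ T, if G.Adj w i then x i else 0 := by
  set ρ := G.spectralRadius with hρd
  have hout : ∀ w ∉ T, (∑ i ∈ T, if G.Adj w i then x i else 0) = ρ * x w := by
    intro w hw
    rw [← mulVec_out hG x hw, hx]; rfl
  have hin : ∀ i ∈ T, ρ * x i =
      ∑ j ∈ T, x j - x i + ∑ w ∈ Tᶜ, if G.Adj i w then x w else 0 := by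
    intro i hi
    rw [← mulVec_in hG x hi, hx]; rfl
  have hSpos : 0 < ∑ j ∈ T, x j := by
    refine lt_of_le_of_ne (Finset.sum_nonneg fun i _ => hnn i) fun h => hx0 ?_
    have hT := (Finset.sum_eq_zero_iff_of_nonneg (fun i _ => hnn i)).1 h.symm
    ext w
    by_cases hw : w ∈ T
    · exact hT w hw
    · have := hout w hw
      rw [Finset.sum_eq_zero (fun i hi => by rw [hT i hi]; simp)] at this
      simpa [hρ.ne'] using this.symm
  have hY : 0 ≤ ∑ w ∈ Tᶜ, x w := Finset.sum_nonneg fun i _ => hnn i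
  have hr : 0 < ρ + 1 := by linarith
  refine ⟨(∑ j ∈ T, x j) / (ρ + 1), (∑ j ∈ T, x j + ∑ w ∈ Tᶜ, x w) / (ρ + 1), ∑ w ∈ Tᶜ, x w,
    by positivity, ?_, ?_, ?_, ?_⟩
  · gcongr; linarith
  · intro i hi
    have h1 := hin i hi
    have h2 : 0 ≤ ∑ w ∈ Tᶜ, if G.Adj i w then x w else 0 :=
      Finset.sum_nonneg fun w _ => by split_ifs; exacts [hnn w, le_rfl]
    have h3 : (∑ w ∈ Tᶜ, if G.Adj i w then x w else 0) ≤ ∑ w ∈ Tᶜ, x w :=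
      Finset.sum_le_sum fun w _ => by split_ifs; exacts [le_rfl, hnn w]
    rw [div_le_iff₀ hr, le_div_iff₀ hr]
    constructor <;> linarith
  · field_simp; ring
  · rw [Finset.mul_sum]
    exact Finset.sum_congr rfl fun w hw => (hout w (Finset.mem_compl.1 hw)).symm

lemma numeric (a b ρ m M d : ℝ) (ha : 2 ≤ a) (hb : a + 1 ≤ b)
    (hρ : (b + 2) * (2 * a + 2 * b + 3) ≤ ρ) (hm : 0 < m) (hd : M - m = d) (hd0 : 0 ≤ d)
    (h : ρ * ((ρ + 1) * d) ≤ ((b + 2) * a - 1) * M) : 2 * d * (2 * a - 1) < M := by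
  have hM : 0 < M := by linarith
  have hρ0 : 0 < ρ := lt_of_lt_of_le (by nlinarith) hρ
  have h1 : 4 * ((b + 2) * a - 1) ≤ ρ := by nlinarith
  have h2 : (ρ + 1) * d ≤ M / 4 := by
    by_contra! hc
    nlinarith
  have h3 : 4 * a ≤ ρ + 1 := by nlinarith
  nlinarith

lemma card_Ico_fin (n l u : ℕ) (hu : u ≤ n) :
    (Finset.univ.filter (fun i : Fin n => l ≤ (i : ℕ) ∧ (i : ℕ) < u)).card = u - l := by
  rw [← Nat.card_Ico, ← Finset.card_map Fin.valEmbedding]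
  congr 1
  ext k
  simp only [Finset.mem_map, Finset.mem_filter, Finset.mem_univ, true_and, Fin.valEmbedding_apply,
    Finset.mem_Ico]
  constructor
  · rintro ⟨i, h, rfl⟩; exact h
  · intro h; exact ⟨⟨k, by omega⟩, h, rfl⟩

/-- the big clique -/
def TT (n b : ℕ) : Finset (Fin n) := Finset.univ.filter (fun i => (i : ℕ) < n - b - 1)

lemma mem_TT {n b : ℕ} {i : Fin n} : i ∈ TT n b ↔ (i : ℕ) < n - b - 1 := by simp [TT]

lemma card_TT (n b : ℕ) : (TT n b).card = n - b - 1 := by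
  have := card_Ico_fin n 0 (n - b - 1) (by omega)
  simpa [TT] using this

lemma H_adj {n a b : ℕ} (i j : Fin n) : (Hgraph n a b).Adj i j ↔
    i ≠ j ∧ ((i : ℕ) < a ∨ (j : ℕ) < a ∨ ((i : ℕ) < n - b - 1 ∧ (j : ℕ) < n - b - 1) ∨
    ((i : ℕ) = n - b - 1 ∧ a ≤ (j : ℕ) ∧ (j : ℕ) < 2 * a - 1) ∨
    ((j : ℕ) = n - b - 1 ∧ a ≤ (i : ℕ) ∧ (i : ℕ) < 2 * a - 1)) := by
  simp only [Hgraph, SimpleGraph.fromRel_adj]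
  tauto

/-- the graph defined by the edge set `F` -/
def GF (n a b : ℕ) (F : Finset (Fin n × Fin n)) : SimpleGraph (Fin n) :=
  baseGraph n a b ⊔ SimpleGraph.fromEdgeSet ((fun p : Fin n × Fin n => s(p.1, p.2)) '' F)

lemma G_adj {n a b : ℕ} (F : Finset (Fin n × Fin n)) (i j : Fin n) : (GF n a b F).Adj i j ↔
    i ≠ j ∧ ((i : ℕ) < a ∨ (j : ℕ) < a ∨ ((i : ℕ) < n - b - 1 ∧ (j : ℕ) < n - b - 1) ∨
    (i, j) ∈ F ∨ (j, i) ∈ F) := by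
  simp only [GF, baseGraph, SimpleGraph.sup_adj, SimpleGraph.fromRel_adj,
    SimpleGraph.fromEdgeSet_adj, Set.mem_image, Finset.mem_coe, Prod.exists, Sym2.eq_iff]
  have : (∃ x y, (x, y) ∈ F ∧ (x = i ∧ y = j ∨ x = j ∧ y = i)) ↔ (i, j) ∈ F ∨ (j, i) ∈ F := by
    constructor
    · rintro ⟨x, y, h, ⟨rfl, rfl⟩ | ⟨rfl, rfl⟩⟩ <;> tauto
    · rintro (h | h)
      · exact ⟨i, j, h, by tauto⟩
      · exact ⟨j, i, h, by tauto⟩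
  rw [this]
  tauto

/-- colours -/
def col (n a b : ℕ) (U : Finset (Fin n)) (w : Fin n) (i : Fin n) : ℕ :=
  if (i : ℕ) < a then 0 else if (i : ℕ) < n - b - 1 then (if i ∈ U then 1 else 2)
  else if i = w then 3 else 4

/-- adjacency of colours -/
def cadj (c d : ℕ) : Prop :=
  c = 0 ∨ d = 0 ∨ (c ≤ 2 ∧ d ≤ 2) ∨ (c = 3 ∧ d = 1) ∨ (c = 1 ∧ d = 3)

lemma fiber_card {n a b : ℕ} (h : a < n - b - 1) (U : Finset (Fin n)) (w : Fin n)
    (hU : ∀ i ∈ U, a ≤ (i : ℕ) ∧ (i : ℕ) < n - b - 1) (hw : n - b - 1 ≤ (w : ℕ)) (c : ℕ) :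
    (Finset.univ.filter (fun i => col n a b U w i = c)).card =
      if c = 0 then a else if c = 1 then U.card else if c = 2 then (n - b - 1 - a) - U.card
      else if c = 3 then 1 else if c = 4 then n - (n - b - 1) - 1 else 0 := by
  split_ifs with h0 h1 h2 h3 h4
  · subst h0
    have := card_Ico_fin n 0 a (by omega)
    rw [Nat.sub_zero] at this
    refine Eq.trans ?_ this; congr 1; ext i
    simp only [Finset.mem_filter, Finset.mem_univ, true_and]
    unfold col
    split_ifs <;> simp <;> omega
  · subst h1
    congr 1; ext i
    have := hU i
    simp only [Finset.mem_filter, Finset.mem_univ, true_and]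
    unfold col
    split_ifs <;> simp <;> grind
  · subst h2
    rw [← card_Ico_fin n a (n - b - 1) (by omega), ← Finset.card_sdiff_of_subset]
    · congr 1; ext i
      have := hU i
      simp only [Finset.mem_filter, Finset.mem_univ, true_and, Finset.mem_sdiff]
      unfold col
      split_ifs <;> simp <;> grind
    · intro i hi; simpa using hU i hi
  · subst h3
    rw [← Finset.card_singleton w]
    congr 1; ext i
    simp only [Finset.mem_filter, Finset.mem_univ, true_and, Finset.mem_singleton]
    unfold col
    split_ifs <;> simp <;> grind
  · subst h4
    have hc := card_Ico_fin n (n - b - 1) n le_rfl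
    have hs := Finset.card_singleton w
    rw [← hc]
    conv_rhs => rw [← hs]
    rw [← Finset.card_sdiff_of_subset]
    · congr 1; ext i
      simp only [Finset.mem_filter, Finset.mem_univ, true_and, Finset.mem_sdiff,
        Finset.mem_singleton]
      unfold col
      split_ifs <;> simp <;> grind
    · simpa using hw
  · rw [Finset.card_eq_zero, Finset.filter_eq_empty_iff]
    intro i _
    unfold col
    split_ifs <;> omega

lemma iso_of_star {n a b : ℕ} (F : Finset (Fin n × Fin n))
    (hF : ∀ p ∈ F, a ≤ (p.1 : ℕ) ∧ (p.1 : ℕ) < n - b - 1 ∧ n - b - 1 ≤ (p.2 : ℕ))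
    (h : 2 * a ≤ n - b - 1) (ha : 0 < a) (hcard : F.card = a - 1) (w : Fin n)
    (hw : n - b - 1 ≤ (w : ℕ)) (hFw : ∀ p ∈ F, p.2 = w) :
    Nonempty (GF n a b F ≃g Hgraph n a b) := by
  set U := F.image Prod.fst with hU
  have hUm : ∀ i, i ∈ U ↔ (i, w) ∈ F := by
    intro i
    simp only [hU, Finset.mem_image, Prod.exists, exists_and_right, exists_eq_right]
    constructor
    · rintro ⟨y, hy⟩; have := hFw _ hy; dsimp at this; rwa [this] at hy
    · intro hy; exact ⟨_, hy⟩
  have hUc : U.card = a - 1 := by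
    rw [← hcard, hU, Finset.card_image_iff]
    intro p hp q hq hpq
    exact Prod.ext hpq ((hFw p hp).trans (hFw q hq).symm)
  have hUC : ∀ i ∈ U, a ≤ (i : ℕ) ∧ (i : ℕ) < n - b - 1 := fun i hi =>
    ⟨(hF _ ((hUm i).1 hi)).1, (hF _ ((hUm i).1 hi)).2.1⟩
  set U' := Finset.univ.filter (fun i : Fin n => a ≤ (i : ℕ) ∧ (i : ℕ) < 2 * a - 1) with hU'
  have hUc' : U'.card = a - 1 := by
    rw [hU', card_Ico_fin n a (2 * a - 1) (by omega)]; omega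
  have hUm' : ∀ i, i ∈ U' ↔ a ≤ (i : ℕ) ∧ (i : ℕ) < 2 * a - 1 := by simp [hU']
  have hUC' : ∀ i ∈ U', a ≤ (i : ℕ) ∧ (i : ℕ) < n - b - 1 := fun i hi => by
    rw [hUm'] at hi; omega
  have hwn := w.2
  let w' : Fin n := ⟨n - b - 1, by omega⟩
  have hfib : ∀ c, Nonempty ({i // col n a b U w i = c} ≃ {i // col n a b U' w' i = c}) := by
    intro c
    rw [← Fintype.card_eq, Fintype.card_subtype, Fintype.card_subtype,
      fiber_card (by omega) U w hUC hw, fiber_card (by omega) U' w' hUC' le_rfl, hUc, hUc']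
  let σ := Equiv.ofFiberEquiv (fun c => Classical.choice (hfib c))
  have hσ : ∀ i, col n a b U' w' (σ i) = col n a b U w i := Equiv.ofFiberEquiv_map _
  have hGc : ∀ i j, (GF n a b F).Adj i j ↔ i ≠ j ∧ cadj (col n a b U w i) (col n a b U w j) := by
    intro i j
    rw [G_adj]
    refine and_congr_right fun _ => ?_
    have h1 : (i, j) ∈ F ↔ i ∈ U ∧ j = w := by
      rw [hUm]
      exact ⟨fun h => ⟨by have := hFw _ h; dsimp at this; rwa [← this], hFw _ h⟩,
        fun h => h.2 ▸ h.1⟩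
    have h2 : (j, i) ∈ F ↔ j ∈ U ∧ i = w := by
      rw [hUm]
      exact ⟨fun h => ⟨by have := hFw _ h; dsimp at this; rwa [← this], hFw _ h⟩,
        fun h => h.2 ▸ h.1⟩
    rw [h1, h2]
    have := hUC i
    have := hUC j
    simp only [cadj, col]
    grind
  have hHc : ∀ i j, (Hgraph n a b).Adj i j ↔
      i ≠ j ∧ cadj (col n a b U' w' i) (col n a b U' w' j) := by
    intro i j
    rw [H_adj]
    refine and_congr_right fun _ => ?_
    have e : ∀ k : Fin n, k = w' ↔ (k : ℕ) = n - b - 1 := fun k => Fin.ext_iff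
    simp only [cadj, col, hUm', e]
    split_ifs <;> norm_num <;> omega
  refine ⟨⟨σ, ?_⟩⟩
  intro i j
  rw [hGc, hHc, hσ, hσ, σ.injective.ne_iff]

lemma G_split {n a b : ℕ} (F : Finset (Fin n × Fin n))
    (hF : ∀ p ∈ F, a ≤ (p.1 : ℕ) ∧ (p.1 : ℕ) < n - b - 1 ∧ n - b - 1 ≤ (p.2 : ℕ))
    (ha : a < n - b - 1) : IsSplit (GF n a b F) (TT n b) := by
  constructor
  · intro i hi j hj hij
    rw [mem_TT] at hi hj
    rw [G_adj]; tauto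
  · intro i hi j hj
    rw [mem_TT] at hi hj
    rw [G_adj]
    have h1 := hF (i, j)
    have h2 := hF (j, i)
    grind

lemma H_split {n a b : ℕ} (h : 2 * a ≤ n - b - 1) (ha : 0 < a) : IsSplit (Hgraph n a b) (TT n b) := by
  constructor
  · intro i hi j hj hij
    rw [mem_TT] at hi hj
    rw [H_adj]; tauto
  · intro i hi j hj
    rw [mem_TT] at hi hj
    rw [H_adj]
    omega

lemma final (a b s τ tH m M Q d : ℝ) (har : 2 ≤ a) (hm : 0 < m) (hd : d = M - m) (hd0 : 0 ≤ d)
    (hs0 : 0 ≤ s) (hsM : s ≤ a * M) (hτM : τ ≤ (a - 1) * M) (htHm : (a - 1) * m ≤ tH)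
    (hsq : Q ≤ (a - 2) * M * τ) (key : 2 * d * (2 * a - 1) < M) :
    (b + 1) * s ^ 2 + 2 * s * τ + Q < (b + 1) * s ^ 2 + 2 * s * tH + tH ^ 2 := by
  have hM0 : 0 < M := by linarith
  have hmd : m = M - d := by rw [hd]; ring
  have hk : (1:ℝ) ≤ a - 1 := by linarith
  have hk0 : 0 ≤ a - 1 := by linarith
  have ha0 : 0 ≤ a := by linarith
  have g1 : s * (τ - tH) ≤ a * M * ((a - 1) * d) := by
    have : τ - tH ≤ (a - 1) * d := by rw [hd]; linarith
    calc s * (τ - tH) ≤ s * ((a - 1) * d) := by gcongr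
      _ ≤ _ := by gcongr
  have g2 : ((a - 1) * m) ^ 2 ≤ tH ^ 2 := by gcongr
  have g3 : (a - 2) * M * τ ≤ (a - 2) * M * ((a - 1) * M) := by
    have : (0:ℝ) ≤ a - 2 := by linarith
    gcongr
  have g4 : (a - 1) ^ 2 * (M ^ 2 - 2 * M * d) ≤ ((a - 1) * m) ^ 2 := by
    rw [hmd]; nlinarith [sq_nonneg ((a - 1) * d)]
  have g5 : (a - 1) * M * (2 * d * (2 * a - 1)) < (a - 1) * M * M :=
    mul_lt_mul_of_pos_left key (by positivity)
  nlinarith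

set_option maxHeartbeats 1000000 in
lemma strict {n a b : ℕ} (F : Finset (Fin n × Fin n))
    (hF : ∀ p ∈ F, a ≤ (p.1 : ℕ) ∧ (p.1 : ℕ) < n - b - 1 ∧ n - b - 1 ≤ (p.2 : ℕ))
    (ha : 0 < a) (hab : a < b) (hn : 2 * (a + b + 2) * (b + 2) ≤ n)
    (hcard : F.card = a - 1)
    (hns : ∀ w : Fin n, n - b - 1 ≤ (w : ℕ) → ∃ p ∈ F, p.2 ≠ w) :
    (GF n a b F).spectralRadius < (Hgraph n a b).spectralRadius := by
  classical
  have hn2 : 2 * a + b + 2 ≤ n := by nlinarith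
  have hGs := G_split F hF (by omega)
  have hHs : IsSplit (Hgraph n a b) (TT n b) := H_split (by omega) ha
  set T := TT n b with hT
  have hnr : (2 * ((a:ℝ) + b + 2) * (b + 2) ≤ n) := by exact_mod_cast hn
  have hTc : (T.card : ℝ) = n - b - 1 := by
    rw [card_TT, Nat.cast_sub (by omega), Nat.cast_sub (by omega)]; simp
  have hTne : T.Nonempty := by
    rw [← Finset.card_pos, card_TT]; omega
  have hρ1 := rho_ge hGs hTne
  rw [hTc] at hρ1
  have hWc : ((Tᶜ).card : ℝ) = b + 1 := by
    rw [Finset.card_compl, Fintype.card_fin, card_TT]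
    have : n - (n - b - 1) = b + 1 := by omega
    rw [this]; simp
  set ρ := (GF n a b F).spectralRadius with hρd
  have hρ2 : ((b:ℝ) + 2) * (2 * a + 2 * b + 3) ≤ ρ := by linarith
  have hρ0 : 0 < ρ := lt_of_lt_of_le (by positivity) hρ2
  haveI : Nonempty (Fin n) := ⟨⟨0, by omega⟩⟩
  obtain ⟨x, hx0, hnn, hx⟩ := exists_perron (GF n a b F)
  obtain ⟨m, M, Y, hm, hmM, hxb, hY1, hY2⟩ := bounds hGs x hx0 hnn hx hρ0
  refine compare hGs hHs x hx hρ0 ?_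
  rw [← hρd] at hY1 hY2
  set w0 : Fin n := ⟨n - b - 1, by omega⟩ with hw0
  have hw0W : w0 ∈ Tᶜ := by simp [hT, mem_TT, hw0]
  have ha2 : 2 ≤ a := by
    obtain ⟨p, hp, -⟩ := hns w0 le_rfl
    have := Finset.card_pos.2 ⟨p, hp⟩
    omega
  set s := ∑ i ∈ T, if (i : ℕ) < a then x i else 0 with hs
  set t : Fin n → ℝ := fun w => ∑ p ∈ F with p.2 = w, x p.1 with ht
  set τ := ∑ p ∈ F, x p.1 with hτ
  set tH := ∑ i ∈ T.filter (fun i : Fin n => a ≤ (i : ℕ) ∧ (i : ℕ) < 2 * a - 1), x i with htH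
  have hp : ∀ w ∈ Tᶜ, (∑ i ∈ T, if (GF n a b F).Adj w i then x i else 0) = s + t w := by
    intro w hw
    rw [Finset.mem_compl, mem_TT] at hw
    have e1 : t w = ∑ i ∈ T, if (i, w) ∈ F then x i else 0 := by
      rw [← Finset.sum_filter, ht]
      refine Finset.sum_nbij' (fun p => p.1) (fun i => (i, w)) ?_ ?_ ?_ ?_ ?_
      · rintro ⟨i, j⟩ hp
        simp only [Finset.mem_filter] at hp ⊢
        obtain ⟨hp, rfl⟩ := hp
        exact ⟨mem_TT.2 (hF _ hp).2.1, hp⟩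
      · intro i hi
        simp only [Finset.mem_filter] at hi ⊢
        exact ⟨hi.2, trivial⟩
      · rintro ⟨i, j⟩ hp
        simp only [Finset.mem_filter] at hp ⊢
        rw [hp.2]
      · intro i _; rfl
      · intro p _; rfl
    rw [e1, hs, ← Finset.sum_add_distrib]
    refine Finset.sum_congr rfl fun i hi => ?_
    rw [hT, mem_TT] at hi
    have h1 : (GF n a b F).Adj w i ↔ (i : ℕ) < a ∨ (i, w) ∈ F := by
      rw [G_adj]
      have := hF (w, i)
      grind
    have h2 := hF (i, w)
    by_cases hia : (i : ℕ) < a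
    · have : (i, w) ∉ F := fun h => by have := (h2 h).1; dsimp at this; omega
      simp [h1, hia, this]
    · simp [h1, hia]
  have hq : ∀ w ∈ Tᶜ, (∑ i ∈ T, if (Hgraph n a b).Adj w i then x i else 0) =
      s + if w = w0 then tH else 0 := by
    intro w hw
    rw [Finset.mem_compl, mem_TT] at hw
    have e1 : (if w = w0 then tH else 0) =
        ∑ i ∈ T, if w = w0 ∧ a ≤ (i : ℕ) ∧ (i : ℕ) < 2 * a - 1 then x i else 0 := by
      split_ifs with h
      · rw [htH, Finset.sum_filter]; simp [h]
      · simp [h]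
    rw [e1, hs, ← Finset.sum_add_distrib]
    refine Finset.sum_congr rfl fun i hi => ?_
    rw [hT, mem_TT] at hi
    have h1 : (Hgraph n a b).Adj w i ↔ (i : ℕ) < a ∨ (w = w0 ∧ a ≤ (i : ℕ) ∧ (i : ℕ) < 2 * a - 1) := by
      rw [H_adj, Fin.ext_iff (b := w0)]
      simp only [hw0]
      grind
    by_cases hia : (i : ℕ) < a
    · have : ¬ (a ≤ (i : ℕ)) := by omega
      simp [h1, hia, this]
    · simp [h1, hia]
  have hsum : ∑ w ∈ Tᶜ, t w = τ := by
    rw [ht, hτ]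
    refine Finset.sum_fiberwise_of_maps_to (fun p hp => ?_) _
    rw [Finset.mem_compl, mem_TT]
    have := hF p hp
    omega
  have hkc : (F.card : ℝ) = a - 1 := by rw [hcard, Nat.cast_sub (by omega)]; simp
  have hM0 : 0 < M := by linarith
  have har : (2:ℝ) ≤ a := by exact_mod_cast ha2
  have hbr : (a:ℝ) + 1 ≤ b := by exact_mod_cast hab
  have hFT : ∀ p ∈ F, p.1 ∈ T := fun p hp => mem_TT.2 (hF p hp).2.1
  have hτM : τ ≤ (a - 1) * M := by
    rw [← hkc, ← nsmul_eq_mul]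
    exact Finset.sum_le_card_nsmul _ _ _ fun p hp => (hxb _ (hFT p hp)).2
  have hsM : s ≤ a * M := by
    rw [hs, ← Finset.sum_filter, ← nsmul_eq_mul]
    have : (T.filter (fun i : Fin n => (i : ℕ) < a)).card = a := by
      have := card_Ico_fin n 0 a (by omega)
      rw [Nat.sub_zero] at this
      refine Eq.trans ?_ this
      congr 1; ext i
      simp only [hT, Finset.mem_filter, mem_TT, Finset.mem_univ, true_and]
      omega
    conv_rhs => rw [← this]
    exact Finset.sum_le_card_nsmul _ _ _ fun p hp => (hxb _ (Finset.mem_filter.1 hp).1).2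
  have hs0 : 0 ≤ s := Finset.sum_nonneg fun i _ => by split_ifs; exacts [hnn i, le_rfl]
  have htHm : (a - 1) * m ≤ tH := by
    have : (T.filter (fun i : Fin n => a ≤ (i : ℕ) ∧ (i : ℕ) < 2 * a - 1)).card = a - 1 := by
      have := card_Ico_fin n a (2 * a - 1) (by omega)
      rw [show 2 * a - 1 - a = a - 1 by omega] at this
      rw [← this]
      congr 1; ext i
      simp only [hT, Finset.mem_filter, mem_TT, Finset.mem_univ, true_and]
      omega
    rw [← hkc, hcard, ← this, ← nsmul_eq_mul]
    exact Finset.card_nsmul_le_sum _ _ _ fun p hp => (hxb _ (Finset.mem_filter.1 hp).1).1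
  have ht0 : ∀ w, 0 ≤ t w := fun w => Finset.sum_nonneg fun p _ => hnn _
  have htM : ∀ w ∈ Tᶜ, t w ≤ (a - 2) * M := by
    intro w hw
    rw [Finset.mem_compl, mem_TT] at hw
    have h1 : (F.filter (fun p => p.2 = w)).card < F.card := by
      apply Finset.card_lt_card
      rw [Finset.filter_ssubset]
      exact hns w (by omega)
    have h2 : ((F.filter (fun p => p.2 = w)).card : ℝ) ≤ a - 2 := by
      have : (F.filter (fun p => p.2 = w)).card + 2 ≤ a := by omega
      have : ((F.filter (fun p => p.2 = w)).card : ℝ) + 2 ≤ a := by exact_mod_cast this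
      linarith
    calc t w ≤ (F.filter (fun p => p.2 = w)).card • M :=
          Finset.sum_le_card_nsmul _ _ _ fun p hp => (hxb _ (hFT p (Finset.mem_filter.1 hp).1)).2
      _ ≤ _ := by rw [nsmul_eq_mul]; gcongr
  have hsq : ∑ w ∈ Tᶜ, t w ^ 2 ≤ (a - 2) * M * τ := by
    rw [← hsum, Finset.mul_sum]
    refine Finset.sum_le_sum fun w hw => ?_
    rw [sq]
    exact mul_le_mul_of_nonneg_right (htM w hw) (ht0 w)
  rw [Finset.sum_congr rfl hp, Finset.sum_add_distrib, hsum, Finset.sum_const, nsmul_eq_mul,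
    hWc] at hY2
  rw [Finset.sum_congr rfl fun w hw => by rw [hp w hw],
    Finset.sum_congr (f := fun w => (∑ i ∈ T, if (Hgraph n a b).Adj w i then x i else 0) ^ 2) rfl
      fun w hw => by rw [hq w hw]]
  have e1 : ∑ w ∈ Tᶜ, (s + t w) ^ 2 = (b + 1) * s ^ 2 + 2 * s * τ + ∑ w ∈ Tᶜ, t w ^ 2 := by
    simp only [add_sq, Finset.sum_add_distrib, Finset.sum_const, nsmul_eq_mul, hWc,
      ← Finset.mul_sum, hsum]
  have e2 : ∑ w ∈ Tᶜ, (s + if w = w0 then tH else 0) ^ 2 =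
      (b + 1) * s ^ 2 + 2 * s * tH + tH ^ 2 := by
    simp only [add_sq, Finset.sum_add_distrib, Finset.sum_const, nsmul_eq_mul, hWc,
      ← Finset.mul_sum, Finset.sum_ite_eq', hw0W, if_true, ite_pow]
    simp [hw0W]
  rw [e1, e2]
  have hd0 : 0 ≤ M - m := by linarith
  have key := numeric a b ρ m M (M - m) har hbr hρ2 hm rfl hd0 (by
    rw [hY1, hY2]
    have : ((b:ℝ) + 1) * s ≤ (b + 1) * (a * M) := by gcongr
    linarith)
  exact final a b s τ tH m M _ (M - m) har hm rfl hd0 hs0 hsM hτM htHm hsq key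

end GFaux

/-- **Lemma (maximality of `H_n^{a,b}` in `𝒢_n^{a,b}`).** -/
theorem GFamily_spectralRadius_le_Hgraph (a b n : ℕ) (ha : 0 < a) (hab : a < b)
    (hn : 2 * (a + b + 2) * (b + 2) ≤ n)
    (G : SimpleGraph (Fin n)) (hG : GFamily n a b G) :
    G.spectralRadius ≤ (Hgraph n a b).spectralRadius ∧
      (G.spectralRadius = (Hgraph n a b).spectralRadius ↔ Nonempty (G ≃g Hgraph n a b)) := by
  obtain ⟨F, hcard, hF, rfl⟩ := hG
  change (GFaux.GF n a b F).spectralRadius ≤ _ ∧ ((GFaux.GF n a b F).spectralRadius = _ ↔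
    Nonempty (GFaux.GF n a b F ≃g _))
  have hn2 : 2 * a + b + 2 ≤ n := by nlinarith
  haveI : Nonempty (Fin n) := ⟨⟨0, by omega⟩⟩
  have hiso : Nonempty (GFaux.GF n a b F ≃g Hgraph n a b) →
      (GFaux.GF n a b F).spectralRadius = (Hgraph n a b).spectralRadius := fun ⟨e⟩ =>
    le_antisymm (GFaux.iso_le _ _ e) (GFaux.iso_le _ _ e.symm)
  by_cases h : ∃ w : Fin n, n - b - 1 ≤ (w : ℕ) ∧ ∀ p ∈ F, p.2 = w
  · obtain ⟨w, hw, hFw⟩ := h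
    have := GFaux.iso_of_star F hF (by omega) ha hcard w hw hFw
    exact ⟨(hiso this).le, fun _ => this, hiso⟩
  · push Not at h
    have := GFaux.strict F hF ha hab hn hcard h
    exact ⟨this.le, fun e => absurd e this.ne, hiso⟩
end

section
/- Let a and b be positive integers with b > a, and let G be a connected graph of order n ≥ 4a + 5b/2 + 6 with minimum degree δ(G) ≥ a. If the number of edges of G satisfies e(G) ≥ C(n-b-1, 2) + ab + 2a, then G contains an [a,b]-factor. -/
set_option linter.unusedSectionVars false

open Finset Matrix

namespace ABF

open Classical in
/-- degree as a filter cardinality -/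
noncomputable def dg {V : Type*} [Fintype V] (H : SimpleGraph V) (v : V) : ℕ :=
  (Finset.univ.filter (fun u => H.Adj v u)).card

/-- total deficiency -/
noncomputable def defi {V : Type*} [Fintype V] (a : ℕ) (H : SimpleGraph V) : ℕ :=
  ∑ v, (a - dg H v)

/-- alternating double step -/
def Stp {V : Type*} (G H : SimpleGraph V) (x z : V) : Prop :=
  ∃ y, G.Adj x y ∧ ¬ H.Adj x y ∧ H.Adj y z

/-- `H` is an optimal subgraph -/
def Opt {V : Type*} [Fintype V] (G : SimpleGraph V) (a b : ℕ) (H : SimpleGraph V) : Prop :=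
  H ≤ G ∧ (∀ v, dg H v ≤ b) ∧
    ∀ H' : SimpleGraph V, H' ≤ G → (∀ v, dg H' v ≤ b) → defi a H ≤ defi a H'

variable {V : Type*} [Fintype V]

lemma opt_of_le {G : SimpleGraph V} {a b : ℕ} {H H' : SimpleGraph V} (h : Opt G a b H)
    (h1 : H' ≤ G) (h2 : ∀ v, dg H' v ≤ b) (h3 : ∀ v, a - dg H' v ≤ a - dg H v) :
    Opt G a b H' ∧ ∀ v, a - dg H' v = a - dg H v := by
  have hle : defi a H' ≤ defi a H := Finset.sum_le_sum (fun v _ => h3 v)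
  have heq : defi a H' = defi a H := le_antisymm hle (h.2.2 H' h1 h2)
  refine ⟨⟨h1, h2, fun K hK hK2 => hle.trans (h.2.2 K hK hK2)⟩, ?_⟩
  intro v
  exact (Finset.sum_eq_sum_iff_of_le (fun v _ => h3 v)).1 heq v (Finset.mem_univ v)

lemma dg_add {H : SimpleGraph V} {x y : V} (hxy : x ≠ y) (h : ¬ H.Adj x y) :
    dg (H ⊔ SimpleGraph.edge x y) x = dg H x + 1 := by
  classical
  unfold dg
  rw [← Finset.card_insert_of_notMem (a := y) (by simpa using h)]
  congr 1
  ext u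
  simp [SimpleGraph.sup_adj, SimpleGraph.edge_adj]
  grind

lemma dg_add_ne {H : SimpleGraph V} {x y v : V} (h1 : v ≠ x) (h2 : v ≠ y) :
    dg (H ⊔ SimpleGraph.edge x y) v = dg H v := by
  classical
  unfold dg
  congr 1
  ext u
  simp [SimpleGraph.sup_adj, SimpleGraph.edge_adj]
  grind

lemma dg_sub {H : SimpleGraph V} {x y : V} (h : H.Adj x y) :
    dg (H \ SimpleGraph.edge x y) x + 1 = dg H x := by
  classical
  unfold dg
  rw [← Finset.card_erase_add_one (a := y)
    (s := Finset.univ.filter (fun u => H.Adj x u)) (by simpa using h)]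
  congr 2
  ext u
  have := h.ne
  simp [SimpleGraph.sdiff_adj, SimpleGraph.edge_adj]
  grind

lemma dg_sub_ne {H : SimpleGraph V} {x y v : V} (h1 : v ≠ x) (h2 : v ≠ y) :
    dg (H \ SimpleGraph.edge x y) v = dg H v := by
  classical
  unfold dg
  congr 1
  ext u
  simp [SimpleGraph.sdiff_adj, SimpleGraph.edge_adj]
  grind

/-- the statement about walks -/
lemma main_ind (G : SimpleGraph V) (a b : ℕ) (hab : a < b) (k : ℕ) :
    (∀ H, Opt G a b H → ∀ f : ℕ → V, dg H (f 0) < a → (∀ i < k, Stp G H (f i) (f (i+1))) →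
      dg H (f k) ≤ a) ∧
    (∀ H, Opt G a b H → ∀ f : ℕ → V, dg H (f 0) < a → (∀ i < k, Stp G H (f i) (f (i+1))) →
      ∀ y, G.Adj (f k) y → ¬ H.Adj (f k) y → dg H y = b) := by
  induction k using Nat.strong_induction_on with
  | _ k ih =>
  have P : (∀ H, Opt G a b H → ∀ f : ℕ → V, dg H (f 0) < a →
      (∀ i < k, Stp G H (f i) (f (i+1))) → dg H (f k) ≤ a) := by
    intro H hO f hf0 hf
    rcases k with _ | k
    · exact hf0.le
    by_contra hcon
    push Not at hcon
    have hle : ∀ i ≤ k, dg H (f i) ≤ a := fun i hi =>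
      (ih i (by omega)).1 H hO f hf0 (fun j hj => hf j (by omega))
    have hne : ∀ i < k, f i ≠ f k := by
      intro i hi he
      have := (ih (i+1) (by omega)).1 H hO (fun j => if j ≤ i then f j else f (k+1))
        (by simpa using hf0) (by
          intro j hj
          rcases Nat.lt_or_ge j i with h | h
          · have h2 : j + 1 ≤ i := h
            simp only [h.le, h2, if_true]
            exact hf j (by omega)
          · have : j = i := by omega
            subst this
            simp only [le_refl, if_true, Nat.not_succ_le_self, if_false]
            rw [he]
            exact hf k (by omega))
      simp at this
      omega
    obtain ⟨y, hG, hnH, hH⟩ := hf k (by omega)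
    have hy : dg H y = b := (ih k (by omega)).2 H hO f hf0 (fun j hj => hf j (by omega)) y hG hnH
    have hxk := hle k le_rfl
    have hxz : f k ≠ f (k+1) := by intro h; rw [← h] at hcon; omega
    have hyz : y ≠ f (k+1) := hH.ne
    have hxy : f k ≠ y := hG.ne
    set x := f k with hx
    set z := f (k+1) with hz
    set H1 := H ⊔ SimpleGraph.edge x y with hH1
    set H2 := H1 \ SimpleGraph.edge y z with hH2
    have a1 : H1.Adj y z := Or.inl hH
    have dx : dg H2 x = dg H x + 1 := by
      rw [hH2, dg_sub_ne hxy hxz, hH1, dg_add hxy hnH]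
    have dy : dg H2 y = dg H y := by
      have h1 := dg_sub a1
      have h2 : dg H1 y = dg H y + 1 := by
        rw [hH1, SimpleGraph.edge_comm]
        exact dg_add hxy.symm (fun h => hnH h.symm)
      rw [← hH2] at h1
      omega
    have dz : dg H2 z + 1 = dg H z := by
      have h1 := dg_sub a1.symm
      rw [SimpleGraph.edge_comm, ← hH2] at h1
      rw [h1, hH1, dg_add_ne hxz.symm hyz.symm]
    have dv : ∀ v, v ≠ x → v ≠ y → v ≠ z → dg H2 v = dg H v := by
      intro v h1 h2 h3
      rw [hH2, dg_sub_ne h2 h3, hH1, dg_add_ne h1 h2]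
    have hH2G : H2 ≤ G := by
      intro u v huv
      rw [hH2, SimpleGraph.sdiff_adj, hH1, SimpleGraph.sup_adj, SimpleGraph.edge_adj] at huv
      rcases huv.1 with h | ⟨⟨h1, h2⟩ | ⟨h1, h2⟩, _⟩
      · exact hO.1 h
      · rw [h1, h2]; exact hG
      · rw [h1, h2]; exact hG.symm
    have hb := hO.2.1
    obtain ⟨hO2, heq⟩ := opt_of_le hO hH2G (by
        intro v
        have := hb v
        by_cases h1 : v = x
        · subst h1; omega
        by_cases h2 : v = y
        · subst h2; omega
        by_cases h3 : v = z
        · rw [h3] at this ⊢; omega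
        rw [dv v h1 h2 h3]; exact this) (by
        intro v
        by_cases h1 : v = x
        · rw [h1]; omega
        by_cases h2 : v = y
        · rw [h2]; omega
        by_cases h3 : v = z
        · rw [h3]; omega
        rw [dv v h1 h2 h3])
    have hr : dg H2 (f 0) < a := by have := heq (f 0); omega
    have hfin := (ih k (by omega)).1 H2 hO2 f hr (by
      intro i hi
      obtain ⟨w, w1, w2, w3⟩ := hf i (by omega)
      have e1 := hne i hi
      have e2 : f i ≠ y := by intro h; have := hle i (by omega); rw [h] at this; omega
      have e3 : f (i+1) ≠ y := by
        intro h; have := hle (i+1) (by omega); rw [h] at this; omega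
      have e4 : f (i+1) ≠ z := by
        intro h; have := hle (i+1) (by omega); rw [h] at this; omega
      refine ⟨w, w1, ?_, ?_⟩
      · rw [hH2, SimpleGraph.sdiff_adj, hH1, SimpleGraph.sup_adj, SimpleGraph.edge_adj]
        grind
      · rw [hH2, SimpleGraph.sdiff_adj, hH1, SimpleGraph.sup_adj, SimpleGraph.edge_adj,
          SimpleGraph.edge_adj]
        grind)
    have := heq x
    rw [← hx] at hfin
    omega
  refine ⟨P, ?_⟩
  intro H hO f hf0 hf y hG hnH
  by_contra hcon
  have hb := hO.2.1
  have hlt : dg H y < b := lt_of_le_of_ne (hb y) hcon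
  have hxk := P H hO f hf0 hf
  have hne : ∀ i < k, f i ≠ f k := by
    intro i hi he
    have := (ih i hi).2 H hO f hf0 (fun j hj => hf j (by omega)) y (by rw [he]; exact hG)
      (by rw [he]; exact hnH)
    omega
  have hxy : f k ≠ y := hG.ne
  have hQ : ∀ i < k, ∀ y, G.Adj (f i) y → ¬ H.Adj (f i) y → dg H y = b := fun i hi =>
    (ih i hi).2 H hO f hf0 (fun j hj => hf j (by omega))
  set x := f k with hx
  set H1 := H ⊔ SimpleGraph.edge x y with hH1
  have dx : dg H1 x = dg H x + 1 := dg_add hxy hnH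
  have dy : dg H1 y = dg H y + 1 := by
    rw [hH1, SimpleGraph.edge_comm]
    exact dg_add hxy.symm (fun h => hnH h.symm)
  have dv : ∀ v, v ≠ x → v ≠ y → dg H1 v = dg H v := fun v h1 h2 => dg_add_ne h1 h2
  have hH1G : H1 ≤ G := by
    intro u v huv
    rw [hH1, SimpleGraph.sup_adj, SimpleGraph.edge_adj] at huv
    rcases huv with h | ⟨⟨h1, h2⟩ | ⟨h1, h2⟩, _⟩
    · exact hO.1 h
    · rw [h1, h2]; exact hG
    · rw [h1, h2]; exact hG.symm
  obtain ⟨hO2, heq⟩ := opt_of_le hO hH1G (by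
      intro v
      have := hb v
      by_cases h1 : v = x
      · rw [h1]; omega
      by_cases h2 : v = y
      · rw [h2]; omega
      rw [dv v h1 h2]; exact this) (by
      intro v
      by_cases h1 : v = x
      · rw [h1]; omega
      by_cases h2 : v = y
      · rw [h2]; omega
      rw [dv v h1 h2])
  have hr : dg H1 (f 0) < a := by have := heq (f 0); omega
  have hfin := P H1 hO2 f hr (by
    intro i hi
    obtain ⟨w, w1, w2, w3⟩ := hf i (by omega)
    have e1 := hne i hi
    have e2 : w ≠ x := by intro h; have := hQ i hi w w1 w2; rw [h] at this; omega
    refine ⟨w, w1, ?_, Or.inl w3⟩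
    rw [hH1, SimpleGraph.sup_adj, SimpleGraph.edge_adj]
    grind)
  have := heq x
  rw [← hx] at hfin
  omega

open Classical in
lemma factor_thm (G : SimpleGraph V) (a b : ℕ) (hab : a < b)
    (hno : ¬ ∃ H : SimpleGraph V, H ≤ G ∧ ∀ v, a ≤ dg H v ∧ dg H v ≤ b) :
    ∃ S T : Finset V, Disjoint S T ∧
      b * S.card + ∑ x ∈ T, (Finset.univ.filter (fun u => G.Adj x u ∧ u ∉ S)).card
        < a * T.card := by
  obtain ⟨H, hO⟩ : ∃ H, Opt G a b H := by
    obtain ⟨H, hH, hmin⟩ := Set.exists_min_image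
      {H : SimpleGraph V | H ≤ G ∧ ∀ v, dg H v ≤ b} (defi a) (Set.toFinite _)
      ⟨⊥, bot_le, by intro v; simp [dg]⟩
    exact ⟨H, hH.1, hH.2, fun K h1 h2 => hmin K ⟨h1, h2⟩⟩
  obtain ⟨r, hr⟩ : ∃ r, dg H r < a := by
    by_contra h
    push Not at h
    exact hno ⟨H, hO.1, fun v => ⟨h v, hO.2.1 v⟩⟩
  set T : Finset V := Finset.univ.filter (fun v => ∃ (k : ℕ) (f : ℕ → V), f 0 = r ∧ f k = v ∧
    ∀ i < k, Stp G H (f i) (f (i+1))) with hT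
  set S : Finset V := Finset.univ.filter (fun y => ∃ x ∈ T, G.Adj x y ∧ ¬ H.Adj x y) with hS
  have hrT : r ∈ T := by
    simp only [hT, Finset.mem_filter, Finset.mem_univ, true_and]
    exact ⟨0, fun _ => r, rfl, rfl, by simp⟩
  have hTa : ∀ x ∈ T, dg H x ≤ a := by
    intro x hx
    simp only [hT, Finset.mem_filter, Finset.mem_univ, true_and] at hx
    obtain ⟨k, f, h0, rfl, hf⟩ := hx
    exact (main_ind G a b hab k).1 H hO f (by rw [h0]; exact hr) hf
  have hSb : ∀ y ∈ S, dg H y = b := by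
    intro y hy
    simp only [hS, Finset.mem_filter, Finset.mem_univ, true_and] at hy
    obtain ⟨x, hx, h1, h2⟩ := hy
    simp only [hT, Finset.mem_filter, Finset.mem_univ, true_and] at hx
    obtain ⟨k, f, h0, rfl, hf⟩ := hx
    exact (main_ind G a b hab k).2 H hO f (by rw [h0]; exact hr) hf y h1 h2
  have hST : ∀ y ∈ S, ∀ z, H.Adj y z → z ∈ T := by
    intro y hy z hz
    simp only [hS, Finset.mem_filter, Finset.mem_univ, true_and] at hy
    obtain ⟨x, hx, h1, h2⟩ := hy
    simp only [hT, Finset.mem_filter, Finset.mem_univ, true_and] at hx ⊢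
    obtain ⟨k, f, h0, rfl, hf⟩ := hx
    refine ⟨k+1, fun j => if j ≤ k then f j else z, by simpa using h0, by simp, ?_⟩
    intro j hj
    rcases Nat.lt_or_ge j k with h | h
    · have h2 : j + 1 ≤ k := h
      simp only [h.le, h2, if_true]
      exact hf j h
    · have : j = k := by omega
      subst this
      simp only [le_refl, if_true, Nat.not_succ_le_self, if_false]
      exact ⟨y, h1, h2, hz⟩
  have hTS : ∀ x ∈ T, ∀ u, G.Adj x u → u ∉ S → H.Adj x u := by
    intro x hx u hu hn
    by_contra h
    exact hn (by
      simp only [hS, Finset.mem_filter, Finset.mem_univ, true_and]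
      exact ⟨x, hx, hu, h⟩)
  refine ⟨S, T, ?_, ?_⟩
  · rw [Finset.disjoint_left]
    intro v h1 h2
    have := hTa v h2
    have := hSb v h1
    omega
  have c1 : b * S.card = ∑ y ∈ S, ∑ x ∈ T, (if H.Adj x y then 1 else 0) := by
    have : ∀ y ∈ S, ∑ x ∈ T, (if H.Adj x y then 1 else 0) = b := by
      intro y hy
      rw [← hSb y hy, dg, Finset.sum_boole]
      simp only [Nat.cast_id]
      congr 1
      ext u
      simp only [Finset.mem_filter, Finset.mem_univ, true_and]
      exact ⟨fun h => h.2.symm, fun h => ⟨hST y hy u h, h.symm⟩⟩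
    rw [Finset.sum_congr rfl this]
    simp [mul_comm]
  have c2 : ∀ x ∈ T, dg H x = ∑ y ∈ S, (if H.Adj x y then 1 else 0) +
      (Finset.univ.filter (fun u => G.Adj x u ∧ u ∉ S)).card := by
    intro x hx
    rw [Finset.sum_boole, dg]
    simp only [Nat.cast_id]
    rw [← Finset.card_union_of_disjoint]
    · congr 1
      ext u
      simp only [Finset.mem_filter, Finset.mem_univ, true_and, Finset.mem_union]
      constructor
      · intro h
        by_cases hu : u ∈ S
        · exact Or.inl ⟨hu, h⟩
        · exact Or.inr ⟨hO.1 h, hu⟩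
      · rintro (h | h)
        · exact h.2
        · exact hTS x hx u h.1 h.2
    · rw [Finset.disjoint_left]
      intro u h1 h2
      simp only [Finset.mem_filter, Finset.mem_univ, true_and] at h1 h2
      exact h2.2 h1.1
  have c3 : ∑ x ∈ T, dg H x < ∑ x ∈ T, a := Finset.sum_lt_sum hTa ⟨r, hrT, hr⟩
  rw [Finset.sum_congr rfl c2, Finset.sum_add_distrib, Finset.sum_comm, ← c1] at c3
  simpa [mul_comm] using c3

open Classical in
lemma edge_bound (G : SimpleGraph V) (S T : Finset V) :
    ∑ v, dg G v + (Fintype.card V - T.card) ≤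
      2 * (T.card * S.card + ∑ x ∈ T, (Finset.univ.filter (fun u => G.Adj x u ∧ u ∉ S)).card)
      + (Fintype.card V - T.card) * (Fintype.card V - T.card) := by
  have h1 : ∑ x ∈ T, dg G x ≤
      T.card * S.card + ∑ x ∈ T, (Finset.univ.filter (fun u => G.Adj x u ∧ u ∉ S)).card := by
    rw [← smul_eq_mul, ← Finset.sum_const, ← Finset.sum_add_distrib]
    refine Finset.sum_le_sum fun x _ => ?_
    refine le_trans (Finset.card_le_card ?_) (Finset.card_union_le _ _)
    intro u hu
    simp only [Finset.mem_filter, Finset.mem_univ, true_and, Finset.mem_union] at hu ⊢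
    tauto
  have h2 : ∑ x ∈ Tᶜ, dg G x + Tᶜ.card ≤ ∑ x ∈ T, dg G x + Tᶜ.card * Tᶜ.card := by
    have e1 : ∑ x ∈ T, ∑ u ∈ Tᶜ, (if G.Adj x u then 1 else 0) ≤ ∑ x ∈ T, dg G x := by
      refine Finset.sum_le_sum fun x _ => ?_
      rw [Finset.sum_boole, dg]
      simp only [Nat.cast_id]
      refine Finset.card_le_card ?_
      intro u hu
      simp only [Finset.mem_filter, Finset.mem_univ, true_and] at hu ⊢
      exact hu.2
    rw [Finset.sum_comm] at e1
    have e2 : ∀ u ∈ Tᶜ, dg G u + 1 ≤ ∑ x ∈ T, (if G.Adj x u then 1 else 0) + Tᶜ.card := by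
      intro u hu
      rw [Finset.sum_boole, ← Finset.card_erase_add_one hu, ← add_assoc]
      simp only [Nat.cast_id]
      refine Nat.succ_le_succ ?_
      refine le_trans (Finset.card_le_card ?_) (Finset.card_union_le _ _)
      intro w hw
      simp only [Finset.mem_filter, Finset.mem_univ, true_and, Finset.mem_union,
        Finset.mem_erase, Finset.mem_compl] at hw ⊢
      by_cases h : w ∈ T
      · exact Or.inl ⟨h, hw.symm⟩
      · exact Or.inr ⟨hw.ne', h⟩
    have e3 := Finset.sum_le_sum e2
    rw [Finset.sum_add_distrib, Finset.sum_add_distrib] at e3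
    simp only [Finset.sum_const, smul_eq_mul, mul_one] at e3
    omega
  rw [← Finset.sum_add_sum_compl T]
  rw [Finset.card_compl] at h2
  omega

lemma arith (a b n s t Q e : ℤ) (ha : 0 < a) (hab : a < b) (hn : 8 * a + 5 * b + 12 ≤ 2 * n)
    (hs : 0 ≤ s) (hst : s + t ≤ n) (hQ0 : 0 ≤ Q) (hQ : t * (a - s) ≤ Q)
    (hf : b * s + Q < a * t) (he1 : 2 * e + (n - t) ≤ 2 * (t * s + Q) + (n - t) * (n - t))
    (he : (n - b - 1) * (n - b - 2) + 2 * (a * b) + 4 * a ≤ 2 * e) : False := by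
  have ht : b + 1 ≤ t := by
    by_contra h
    have h : t ≤ b := by omega
    nlinarith [mul_le_mul_of_nonneg_right h hs]
  obtain ⟨j, rfl⟩ : ∃ j, t = b + 1 + j := ⟨t - b - 1, by ring⟩
  have hj : 0 ≤ j := by omega
  have hsa : s - a ≤ j := by
    by_contra h
    have : j + 1 ≤ s - a := by omega
    nlinarith
  -- m = n - b - 1 - j
  obtain ⟨m, hm⟩ : ∃ m, m = n - b - 1 - j := ⟨_, rfl⟩
  have hn' : n = m + b + 1 + j := by omega
  have hsm : s ≤ m := by omega
  have key : j * (2 * m + j - 1) < 2 * (j * (s + a) + s - a) := by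
    subst hn'
    nlinarith
  rcases eq_or_lt_of_le hj with h0 | h0
  · subst h0
    have : s ≤ a := by omega
    nlinarith
  rcases le_or_gt (2 * a + 3) j with h | h
  · nlinarith [mul_nonneg hj (sub_nonneg.2 hsm), mul_nonneg hj (sub_nonneg.2 h)]
  · have : 2 * (s + a + 1) ≤ 2 * m + j - 1 := by omega
    nlinarith [mul_le_mul_of_nonneg_left this hj]

end ABF

theorem size_abFactor (a b n : ℕ) (ha : 0 < a) (hab : a < b)
    (hn : 4 * (a : ℝ) + 5 * (b : ℝ) / 2 + 6 ≤ (n : ℝ))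
    (G : SimpleGraph (Fin n)) [DecidableRel G.Adj]
    (hconn : G.Connected) (hδ : ∀ v, a ≤ G.degree v)
    (he : (n - b - 1).choose 2 + a * b + 2 * a ≤ G.edgeFinset.card) :
    G.HasABFactor a b := by
  have dgd : ∀ (H : SimpleGraph (Fin n)) [DecidableRel H.Adj] (v : Fin n),
      H.degree v = ABF.dg H v := by
    intro H _ v
    rw [ABF.dg, ← SimpleGraph.card_neighborFinset_eq_degree]
    congr 1
    ext u
    simp
  by_contra hno
  obtain ⟨S, T, hd, hlt⟩ := ABF.factor_thm G a b hab (by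
    rintro ⟨H, h1, h2⟩
    refine hno ⟨H, h1, fun v => ?_⟩
    let _ := Classical.decRel H.Adj
    have := h2 v
    rw [← dgd H v] at this
    exact this)
  have hb := ABF.edge_bound G S T
  have hsum : ∑ v, ABF.dg G v = 2 * G.edgeFinset.card := by
    rw [← G.sum_degrees_eq_twice_card_edges]
    exact Finset.sum_congr rfl fun v _ => (dgd G v).symm
  have hcard : S.card + T.card ≤ n := by
    rw [← Finset.card_union_of_disjoint hd]
    simpa using Finset.card_le_univ (S ∪ T)
  have hn2 : 8 * a + 5 * b + 12 ≤ 2 * n := by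
    have : (8 * a + 5 * b + 12 : ℝ) ≤ 2 * n := by linarith
    exact_mod_cast this
  rw [hsum, Fintype.card_fin] at hb
  classical
  set Q := ∑ x ∈ T, (Finset.univ.filter (fun u => G.Adj x u ∧ u ∉ S)).card with hQ
  have hlt' : b * S.card + Q < a * T.card := by rw [hQ]; convert hlt
  have hb' : 2 * G.edgeFinset.card + (n - T.card) ≤ 2 * (T.card * S.card + Q) +
      (n - T.card) * (n - T.card) := by rw [hQ]; convert hb
  have hQ1 : T.card * a ≤ T.card * S.card + Q := by
    rw [hQ, ← smul_eq_mul, ← smul_eq_mul, ← Finset.sum_const, ← Finset.sum_const,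
      ← Finset.sum_add_distrib]
    refine Finset.sum_le_sum fun x _ => ?_
    refine (hδ x).trans ?_
    rw [dgd]
    refine le_trans (Finset.card_le_card ?_) (Finset.card_union_le _ _)
    intro u hu
    simp only [Finset.mem_filter, Finset.mem_univ, true_and, Finset.mem_union] at hu ⊢
    tauto
  have hch : (n - b - 1).choose 2 * 2 = (n - b - 1) * (n - b - 2) := by
    rw [Nat.choose_two_right, Nat.div_mul_cancel (Nat.even_mul_pred_self _).two_dvd]
    rfl
  have hch' : ((n - b - 1).choose 2 : ℤ) * 2 = ((n : ℤ) - b - 1) * (n - b - 2) := by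
    have := congrArg (Nat.cast : ℕ → ℤ) hch
    push_cast at this
    rw [this]
    have h1 : ((n - b - 1 : ℕ) : ℤ) = n - b - 1 := by omega
    have h2 : ((n - b - 2 : ℕ) : ℤ) = n - b - 2 := by omega
    rw [h1, h2]
  obtain ⟨q, hq⟩ : ∃ q, q = n - T.card := ⟨_, rfl⟩
  rw [← hq] at hb'
  have hq' : (q : ℤ) = n - T.card := by omega
  refine ABF.arith a b n S.card T.card Q G.edgeFinset.card (by omega) (by omega) (by omega)
    (by omega) (by omega) (by omega) ?_ ?_ ?_ ?_
  · zify at hQ1; linarith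
  · exact_mod_cast hlt'
  · rw [← hq']
    exact_mod_cast hb'
  · zify at he; linarith
end
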